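/- arXiv:1208.4697 — 4 statements merged into one kernel-verified Lean document; each statement's English description precedes it below -/
import Mathlib

section
/- Let X ⊆ ℝⁿ be an open, order-convex set such that x ∨ y ∈ X and x ∧ y ∈ X for all x, y ∈ X, let f : X → ℝⁿ be a C¹ cooperative irreducible vector field, and let H : X → ℝ be a C¹ first integral for ẋ = f(x) with positive gradient. Fix c ∈ ℝ and assume that for every x ∈ H⁻¹(c) the (unique) maximal solution γₓ of ẋ = f(x) with γₓ(0) = x is defined on all of [0,∞) and remains in X. Then exactly one of the following holds: (a) there is exactly one y ∈ H⁻¹(c) with f(y) = 0, and γₓ(t) → y as t → ∞ for every x ∈ H⁻¹(c); or (b) f has no zero in H⁻¹(c), and for every x ∈ H⁻¹(c) the ω-limit set of γₓ is empty. -/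
open Set Filter Topology

noncomputable section

/-- `f` is a cooperative vector field on `X`: the off-diagonal entries of the
Jacobian are nonnegative. -/
def coopVF {n : ℕ} (f : (Fin n → ℝ) → (Fin n → ℝ)) (X : Set (Fin n → ℝ)) : Prop :=
  ∀ x ∈ X, ∀ i j : Fin n, i ≠ j → 0 ≤ fderiv ℝ f x (Pi.single j 1) i

/-- The Jacobian matrix of `f` at `x`. -/
def jacMat {n : ℕ} (f : (Fin n → ℝ) → (Fin n → ℝ)) (x : Fin n → ℝ) :
    Fin n → Fin n → ℝ :=
  fun i j => fderiv ℝ f x (Pi.single j 1) i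

/-- A matrix is irreducible if for every nonempty proper subset `S` of indices there
are `i ∈ S`, `j ∉ S` with `A i j ≠ 0`. -/
def matIrred {n : ℕ} (A : Fin n → Fin n → ℝ) : Prop :=
  ∀ S : Set (Fin n), S.Nonempty → S ≠ Set.univ → ∃ i ∈ S, ∃ j ∉ S, A i j ≠ 0

/-- `X` is p-convex: the segment joining any two order-related points of `X` lies in `X`. -/
def pconvex {n : ℕ} (X : Set (Fin n → ℝ)) : Prop :=
  ∀ x ∈ X, ∀ y ∈ X, x < y → segment ℝ x y ⊆ X

/-- `x ≪ y`: strict inequality in every coordinate. -/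
def strLt {n : ℕ} (x y : Fin n → ℝ) : Prop := ∀ i, x i < y i

/-- `γ` is a solution of `ẋ = f(x)` on the time interval `I`, with values in `X`. -/
def IsSolOn {n : ℕ} (f : (Fin n → ℝ) → (Fin n → ℝ)) (X : Set (Fin n → ℝ))
    (I : Set ℝ) (γ : ℝ → Fin n → ℝ) : Prop :=
  (∀ t ∈ I, γ t ∈ X) ∧ (∀ t ∈ I, HasDerivWithinAt γ (f (γ t)) I t)

/-- The ω-limit set (within `X`) of a curve `γ`. -/
def omegaSet {n : ℕ} (X : Set (Fin n → ℝ)) (γ : ℝ → Fin n → ℝ) :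
    Set (Fin n → ℝ) :=
  {y | y ∈ X ∧ ∃ t : ℕ → ℝ, Tendsto t atTop atTop ∧
    Tendsto (fun k => γ (t k)) atTop (𝓝 y)}

/-- The α-limit set (within `X`) of a curve `γ`. -/
def alphaSet {n : ℕ} (X : Set (Fin n → ℝ)) (γ : ℝ → Fin n → ℝ) :
    Set (Fin n → ℝ) :=
  {y | y ∈ X ∧ ∃ t : ℕ → ℝ, Tendsto t atTop atBot ∧
    Tendsto (fun k => γ (t k)) atTop (𝓝 y)}

/-- The Euclidean norm on `Fin n → ℝ`. -/
def eunorm {n : ℕ} (v : Fin n → ℝ) : ℝ := Real.sqrt (∑ i, (v i) ^ 2)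

/-- `X` is order-convex: it contains the order interval of any two of its points. -/
def orderConvex {n : ℕ} (X : Set (Fin n → ℝ)) : Prop :=
  ∀ x ∈ X, ∀ y ∈ X, x ≤ y → Set.Icc x y ⊆ X

lemma aux_expand {n : ℕ} {F : Type*} [NormedAddCommGroup F] [NormedSpace ℝ F]
    (L : (Fin n → ℝ) →L[ℝ] F) (v : Fin n → ℝ) :
    L v = ∑ j, v j • L (Pi.single j 1) := by
  conv_lhs => rw [pi_eq_sum_univ' v]
  rw [map_sum]
  simp [map_smul]

lemma aux_seg_mem {n : ℕ} {X : Set (Fin n → ℝ)} (hoc : orderConvex X) {x z : Fin n → ℝ}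
    (hx : x ∈ X) (hz : z ∈ X) (hxz : x ≤ z) {s : ℝ} (hs : s ∈ Set.Icc (0:ℝ) 1) :
    x + s • (z - x) ∈ X := by
  apply hoc x hx z hz hxz
  constructor
  · intro i
    have h1 := hxz i
    have : 0 ≤ s * (z i - x i) := mul_nonneg hs.1 (by linarith)
    simp only [Pi.add_apply, Pi.smul_apply, Pi.sub_apply, smul_eq_mul]; linarith
  · intro i
    have h1 := hxz i
    have : 0 ≤ (1 - s) * (z i - x i) := mul_nonneg (by linarith [hs.2]) (by linarith)
    simp only [Pi.add_apply, Pi.smul_apply, Pi.sub_apply, smul_eq_mul]; linarith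

lemma aux_path_deriv {n : ℕ} (x v : Fin n → ℝ) (s : ℝ) :
    HasDerivAt (fun s : ℝ => x + s • v) v s := by
  simpa using ((hasDerivAt_id s).smul_const v).const_add x

lemma aux_hasFD {n : ℕ} {F : Type*} [NormedAddCommGroup F] [NormedSpace ℝ F]
    {X : Set (Fin n → ℝ)} (hX : IsOpen X) {f : (Fin n → ℝ) → F}
    (hf : ContDiffOn ℝ 1 f X) {x : Fin n → ℝ} (hx : x ∈ X) :
    HasFDerivAt f (fderiv ℝ f x) x :=
  ((hf.contDiffAt (hX.mem_nhds hx)).differentiableAt (by norm_num)).hasFDerivAt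

lemma aux_H_lt {n : ℕ} {X : Set (Fin n → ℝ)} (hX : IsOpen X) (hoc : orderConvex X)
    {H : (Fin n → ℝ) → ℝ} (hH : ContDiffOn ℝ 1 H X)
    (hgrad : ∀ x ∈ X, ∀ i, 0 < fderiv ℝ H x (Pi.single i 1)) {x z : Fin n → ℝ}
    (hx : x ∈ X) (hz : z ∈ X) (hxz : x ≤ z) (hne : x ≠ z) : H x < H z := by
  have hd : ∀ s ∈ Set.Icc (0:ℝ) 1, HasDerivAt (fun s : ℝ => H (x + s • (z - x)))
      (fderiv ℝ H (x + s • (z - x)) (z - x)) s := fun s hs =>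
    (aux_hasFD hX hH (aux_seg_mem hoc hx hz hxz hs)).comp_hasDerivAt s (aux_path_deriv x (z - x) s)
  have hm : StrictMonoOn (fun s : ℝ => H (x + s • (z - x))) (Set.Icc 0 1) := by
    apply strictMonoOn_of_deriv_pos (convex_Icc 0 1)
    · exact fun s hs => (hd s hs).continuousAt.continuousWithinAt
    · intro s hs
      have hs' := interior_subset hs
      rw [(hd s hs').deriv, aux_expand]
      obtain ⟨j, hj⟩ := Function.ne_iff.1 hne
      apply Finset.sum_pos'
      · intro k _
        exact mul_nonneg (sub_nonneg.2 (hxz k)) (hgrad _ (aux_seg_mem hoc hx hz hxz hs') k).le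
      · exact ⟨j, Finset.mem_univ _, mul_pos (sub_pos.2 (lt_of_le_of_ne (hxz j) hj))
          (hgrad _ (aux_seg_mem hoc hx hz hxz hs') j)⟩
  have := hm (by simp) (by simp) (zero_lt_one)
  simpa using this

lemma aux_H_le {n : ℕ} {X : Set (Fin n → ℝ)} (hX : IsOpen X) (hoc : orderConvex X)
    {H : (Fin n → ℝ) → ℝ} (hH : ContDiffOn ℝ 1 H X)
    (hgrad : ∀ x ∈ X, ∀ i, 0 < fderiv ℝ H x (Pi.single i 1)) {x z : Fin n → ℝ}
    (hx : x ∈ X) (hz : z ∈ X) (hxz : x ≤ z) : H x ≤ H z := by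
  by_cases hne : x = z
  · rw [hne]
  · exact (aux_H_lt hX hoc hH hgrad hx hz hxz hne).le

/-- Kamke condition. -/
lemma aux_kamke {n : ℕ} {X : Set (Fin n → ℝ)} (hX : IsOpen X) (hoc : orderConvex X)
    {f : (Fin n → ℝ) → (Fin n → ℝ)} (hf : ContDiffOn ℝ 1 f X) (hcoop : coopVF f X)
    {x z : Fin n → ℝ} (hx : x ∈ X) (hz : z ∈ X) (hxz : x ≤ z) {i : Fin n} (hi : x i = z i) :
    f x i ≤ f z i ∧ (∀ j, jacMat f x i j ≠ 0 → x j < z j → f x i < f z i) := by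
  have hd : ∀ s ∈ Set.Icc (0:ℝ) 1, HasDerivAt (fun s : ℝ => f (x + s • (z - x)) i)
      (fderiv ℝ f (x + s • (z - x)) (z - x) i) s := fun s hs =>
    (hasDerivAt_pi.1 ((aux_hasFD hX hf
      (aux_seg_mem hoc hx hz hxz hs)).comp_hasDerivAt s (aux_path_deriv x (z - x) s))) i
  have hterm : ∀ y ∈ X, ∀ k, 0 ≤ (z k - x k) * (fderiv ℝ f y (Pi.single k 1) i) := by
    intro y hy k
    by_cases hk : i = k
    · subst hk; simp [hi]
    · exact mul_nonneg (sub_nonneg.2 (hxz k)) (hcoop y hy i k hk)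
  have hex : ∀ y, fderiv ℝ f y (z - x) i = ∑ k, (z k - x k) * (fderiv ℝ f y (Pi.single k 1) i) := by
    intro y
    rw [aux_expand]
    simp [Finset.sum_apply]
  have hm : MonotoneOn (fun s : ℝ => f (x + s • (z - x)) i) (Set.Icc 0 1) := by
    apply monotoneOn_of_deriv_nonneg (convex_Icc 0 1)
    · exact fun s hs => (hd s hs).continuousAt.continuousWithinAt
    · exact fun s hs => (hd s (interior_subset hs)).differentiableAt.differentiableWithinAt
    · intro s hs
      have hs' := interior_subset hs
      rw [(hd s hs').deriv, hex]
      exact Finset.sum_nonneg fun k _ => hterm _ (aux_seg_mem hoc hx hz hxz hs') k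
  refine ⟨by simpa using hm (by simp) (by simp) (zero_le_one' ℝ), ?_⟩
  intro j hj hlt
  by_contra hcon
  push Not at hcon
  have hconst : ∀ s ∈ Set.Icc (0:ℝ) 1, f (x + s • (z - x)) i = f x i := by
    intro s hs
    have h1 := hm (by simp) hs hs.1
    have h2 := hm hs (by simp) hs.2
    simp only [zero_smul, add_zero, one_smul, add_sub_cancel] at h1 h2
    linarith
  have h0 := (hd 0 (by simp)).hasDerivWithinAt (s := Set.Icc 0 1)
  have h0' : HasDerivWithinAt (fun s : ℝ => f (x + s • (z - x)) i) 0 (Set.Icc 0 1) 0 :=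
    (hasDerivWithinAt_const (0:ℝ) (Set.Icc (0:ℝ) 1) (f x i)).congr hconst (by simp)
  have huniq := (uniqueDiffOn_Icc (zero_lt_one' ℝ) 0 (by simp)).eq_deriv _ h0 h0'
  simp only [zero_smul, add_zero] at huniq
  rw [hex] at huniq
  have hij : i ≠ j := by rintro rfl; exact absurd hi hlt.ne
  have : 0 < ∑ k, (z k - x k) * (fderiv ℝ f x (Pi.single k 1) i) :=
    Finset.sum_pos' (fun k _ => hterm x hx k) ⟨j, Finset.mem_univ _,
      mul_pos (sub_pos.2 hlt) (lt_of_le_of_ne (hcoop x hx i j hij) (Ne.symm hj))⟩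
  linarith

/-- Right derivative of a maximum. -/
lemma aux_max_deriv {a b : ℝ → ℝ} {a' b' t : ℝ} (ha : HasDerivWithinAt a a' (Ici t) t)
    (hb : HasDerivWithinAt b b' (Ici t) t) :
    HasDerivWithinAt (fun s => max (a s) (b s))
      (if b t < a t then a' else if a t < b t then b' else max a' b') (Ici t) t := by
  split_ifs with h1 h2
  · have : ∀ᶠ s in 𝓝[Ici t] t, b s < a s :=
      hb.continuousWithinAt.eventually_lt ha.continuousWithinAt h1
    refine ha.congr_of_eventuallyEq (this.mono fun s hs => max_eq_left hs.le) (max_eq_left h1.le)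
  · have : ∀ᶠ s in 𝓝[Ici t] t, a s < b s :=
      ha.continuousWithinAt.eventually_lt hb.continuousWithinAt h2
    refine hb.congr_of_eventuallyEq (this.mono fun s hs => max_eq_right hs.le) (max_eq_right h2.le)
  · have he : a t = b t := le_antisymm (not_lt.1 h1) (not_lt.1 h2)
    rw [hasDerivWithinAt_iff_tendsto_slope] at *
    refine (ha.max hb).congr' ?_
    filter_upwards [self_mem_nhdsWithin] with s hs
    have hst : 0 < s - t := sub_pos.2 (lt_of_le_of_ne hs.1 (fun h => hs.2 h.symm))
    simp only [slope_def_field, he, max_self]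
    rw [max_div_div_right hst.le, max_sub_sub_right]

lemma aux_min_deriv {a b : ℝ → ℝ} {a' b' t : ℝ} (ha : HasDerivWithinAt a a' (Ici t) t)
    (hb : HasDerivWithinAt b b' (Ici t) t) :
    HasDerivWithinAt (fun s => min (a s) (b s))
      (if b t < a t then b' else if a t < b t then a' else min a' b') (Ici t) t := by
  have h := (aux_max_deriv ha.neg hb.neg).neg
  refine (h.congr_deriv ?_).congr (fun s _ => ?_) ?_
  · simp only [Pi.neg_apply, neg_lt_neg_iff]
    by_cases h1 : a t < b t
    · simp [h1, not_lt.2 h1.le]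
    · by_cases h2 : b t < a t
      · simp [h1, h2]
      · simp [h1, h2, max_neg_neg]
  · simp [max_neg_neg]
  · simp [max_neg_neg]

/-- Comparison from a bound on right derivatives. -/
lemma aux_decr {V V' : ℝ → ℝ} {a b k : ℝ} (hab : a ≤ b)
    (hV : ∀ t ∈ Set.Icc a b, ContinuousWithinAt V (Set.Icc a b) t)
    (hd : ∀ t ∈ Set.Ico a b, HasDerivWithinAt V (V' t) (Ici t) t)
    (hk : ∀ t ∈ Set.Ico a b, V' t ≤ -k) : V b ≤ V a - k * (b - a) := by
  have := image_le_of_deriv_right_le_deriv_boundary (f := V) (f' := V') (a := a) (b := b)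
    (B := fun t => V a - k * (t - a)) (B' := fun _ => -k) hV hd (by simp)
    (by fun_prop) (fun t _ => by
      have := ((((hasDerivAt_id t).sub_const a).const_mul k).const_sub (V a)).hasDerivWithinAt
        (s := Ici t)
      simpa using this) hk
  exact this ⟨hab, le_rfl⟩

lemma aux_cont_sup {n : ℕ} : Continuous (fun q : (Fin n → ℝ) × (Fin n → ℝ) => q.1 ⊔ q.2) := by
  refine continuous_pi fun i => ?_
  simp only [Pi.sup_apply]
  fun_prop

lemma aux_cont_inf {n : ℕ} : Continuous (fun q : (Fin n → ℝ) × (Fin n → ℝ) => q.1 ⊓ q.2) := by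
  refine continuous_pi fun i => ?_
  simp only [Pi.inf_apply]
  fun_prop

/-- The standing assumptions. -/
structure AuxSetup {n : ℕ} (X : Set (Fin n → ℝ)) (f : (Fin n → ℝ) → (Fin n → ℝ))
    (H : (Fin n → ℝ) → ℝ) : Prop where
  hX : IsOpen X
  hoc : orderConvex X
  hlat : ∀ x ∈ X, ∀ y ∈ X, x ⊔ y ∈ X ∧ x ⊓ y ∈ X
  hf : ContDiffOn ℝ 1 f X
  hcoop : coopVF f X
  hirr : ∀ x ∈ X, matIrred (jacMat f x)
  hH : ContDiffOn ℝ 1 H X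
  hfi : ∀ x ∈ X, fderiv ℝ H x (f x) = 0
  hgrad : ∀ x ∈ X, ∀ i, 0 < fderiv ℝ H x (Pi.single i 1)

/-- right derivative of the maximum of two solutions -/
def auxMx {n : ℕ} (f : (Fin n → ℝ) → (Fin n → ℝ)) (x w : Fin n → ℝ) : Fin n → ℝ :=
  fun i => if w i < x i then f x i else if x i < w i then f w i else max (f x i) (f w i)

/-- right derivative of the minimum of two solutions -/
def auxMn {n : ℕ} (f : (Fin n → ℝ) → (Fin n → ℝ)) (x w : Fin n → ℝ) : Fin n → ℝ :=
  fun i => if w i < x i then f w i else if x i < w i then f x i else min (f x i) (f w i)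

namespace AuxSetup

variable {n : ℕ} {X : Set (Fin n → ℝ)} {f : (Fin n → ℝ) → (Fin n → ℝ)}
    {H : (Fin n → ℝ) → ℝ}

lemma le_H (S : AuxSetup X f H) {x z : Fin n → ℝ}
    (hx : x ∈ X) (hz : z ∈ X) (hxz : x ≤ z) : H x ≤ H z :=
  aux_H_le S.hX S.hoc S.hH S.hgrad hx hz hxz

lemma mx_le (S : AuxSetup X f H) {x w : Fin n → ℝ} (hx : x ∈ X) (hw : w ∈ X) (i : Fin n) :
    auxMx f x w i ≤ f (x ⊔ w) i := by
  have hz := (S.hlat x hx w hw).1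
  have h1 : w i ≤ x i → f x i ≤ f (x ⊔ w) i := fun h =>
    (aux_kamke S.hX S.hoc S.hf S.hcoop hx hz le_sup_left (by simp [h])).1
  have h2 : x i ≤ w i → f w i ≤ f (x ⊔ w) i := fun h =>
    (aux_kamke S.hX S.hoc S.hf S.hcoop hw hz le_sup_right (by simp [h])).1
  unfold auxMx
  split_ifs with h h'
  · exact h1 h.le
  · exact h2 h'.le
  · exact max_le (h1 (not_lt.1 h')) (h2 (not_lt.1 h))

lemma le_mn (S : AuxSetup X f H) {x w : Fin n → ℝ} (hx : x ∈ X) (hw : w ∈ X) (i : Fin n) :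
    f (x ⊓ w) i ≤ auxMn f x w i := by
  have hz := (S.hlat x hx w hw).2
  have h1 : x i ≤ w i → f (x ⊓ w) i ≤ f x i := fun h =>
    (aux_kamke S.hX S.hoc S.hf S.hcoop hz hx inf_le_left (by simp [h])).1
  have h2 : w i ≤ x i → f (x ⊓ w) i ≤ f w i := fun h =>
    (aux_kamke S.hX S.hoc S.hf S.hcoop hz hw inf_le_right (by simp [h])).1
  unfold auxMn
  split_ifs with h h'
  · exact h2 h.le
  · exact h1 h'.le
  · exact le_min (h1 (not_lt.1 h)) (h2 (not_lt.1 h'))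

/-- If `m ≤ f z` then `DH z m ≤ 0`, quantitatively. -/
lemma DH_le (S : AuxSetup X f H) {z m : Fin n → ℝ} (hz : z ∈ X) (hm : m ≤ f z) (i : Fin n) :
    fderiv ℝ H z m ≤ -((f z i - m i) * fderiv ℝ H z (Pi.single i 1)) := by
  have h1 : fderiv ℝ H z (f z - m) = - fderiv ℝ H z m := by
    rw [map_sub, S.hfi z hz]; simp
  rw [aux_expand] at h1
  have h2 : (f z - m) i • fderiv ℝ H z (Pi.single i 1) ≤
      ∑ j, (f z - m) j • fderiv ℝ H z (Pi.single j 1) :=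
    Finset.single_le_sum (f := fun j => (f z - m) j • fderiv ℝ H z (Pi.single j 1))
      (fun j _ => mul_nonneg (sub_nonneg.2 (hm j)) (S.hgrad z hz j).le) (Finset.mem_univ i)
  simp only [Pi.sub_apply, smul_eq_mul] at h1 h2
  linarith

lemma DH_nonpos (S : AuxSetup X f H) {z m : Fin n → ℝ} (hz : z ∈ X) (hm : m ≤ f z) :
    fderiv ℝ H z m ≤ 0 := by
  have h1 : fderiv ℝ H z (f z - m) = - fderiv ℝ H z m := by
    rw [map_sub, S.hfi z hz]; simp
  rw [aux_expand] at h1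
  have h2 : 0 ≤ ∑ j, (f z - m) j • fderiv ℝ H z (Pi.single j 1) :=
    Finset.sum_nonneg
      (fun j _ => mul_nonneg (sub_nonneg.2 (hm j)) (S.hgrad z hz j).le)
  linarith

lemma DH_nonneg (S : AuxSetup X f H) {z m : Fin n → ℝ} (hz : z ∈ X) (hm : f z ≤ m) :
    0 ≤ fderiv ℝ H z m := by
  have h1 : fderiv ℝ H z (m - f z) = fderiv ℝ H z m := by
    rw [map_sub, S.hfi z hz]; simp
  rw [aux_expand] at h1
  rw [← h1]
  exact Finset.sum_nonneg
      (fun j _ => mul_nonneg (sub_nonneg.2 (hm j)) (S.hgrad z hz j).le)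

lemma sol_right {I : Set ℝ} {u : ℝ → Fin n → ℝ} (hu : IsSolOn f X I u) {t : ℝ}
    (ht : Ici t ⊆ I) : HasDerivWithinAt u (f (u t)) (Ici t) t :=
  (hu.2 t (ht self_mem_Ici)).mono ht

lemma V_deriv (S : AuxSetup X f H) {u v : ℝ → Fin n → ℝ} (hu : IsSolOn f X (Ici 0) u)
    (hv : IsSolOn f X (Ici 0) v) {t : ℝ} (ht : 0 ≤ t) :
    HasDerivWithinAt (fun s => H (u s ⊔ v s)) (fderiv ℝ H (u t ⊔ v t) (auxMx f (u t) (v t)))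
      (Ici t) t := by
  have hz := (S.hlat _ (hu.1 t ht) _ (hv.1 t ht)).1
  refine (aux_hasFD S.hX S.hH hz).comp_hasDerivWithinAt t ?_
  refine hasDerivWithinAt_pi.2 fun i => ?_
  exact aux_max_deriv (hasDerivWithinAt_pi.1 (sol_right hu (Ici_subset_Ici.2 ht)) i)
    (hasDerivWithinAt_pi.1 (sol_right hv (Ici_subset_Ici.2 ht)) i)

lemma W_deriv (S : AuxSetup X f H) {u v : ℝ → Fin n → ℝ} (hu : IsSolOn f X (Ici 0) u)
    (hv : IsSolOn f X (Ici 0) v) {t : ℝ} (ht : 0 ≤ t) :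
    HasDerivWithinAt (fun s => H (u s ⊓ v s)) (fderiv ℝ H (u t ⊓ v t) (auxMn f (u t) (v t)))
      (Ici t) t := by
  have hz := (S.hlat _ (hu.1 t ht) _ (hv.1 t ht)).2
  refine (aux_hasFD S.hX S.hH hz).comp_hasDerivWithinAt t ?_
  refine hasDerivWithinAt_pi.2 fun i => ?_
  exact aux_min_deriv (hasDerivWithinAt_pi.1 (sol_right hu (Ici_subset_Ici.2 ht)) i)
    (hasDerivWithinAt_pi.1 (sol_right hv (Ici_subset_Ici.2 ht)) i)

lemma sol_cont {u : ℝ → Fin n → ℝ} (hu : IsSolOn f X (Ici 0) u) : ContinuousOn u (Ici 0) :=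
  fun t ht => (hu.2 t ht).continuousWithinAt

lemma V_cont (S : AuxSetup X f H) {u v : ℝ → Fin n → ℝ} (hu : IsSolOn f X (Ici 0) u)
    (hv : IsSolOn f X (Ici 0) v) : ContinuousOn (fun s => H (u s ⊔ v s)) (Ici 0) :=
  S.hH.continuousOn.comp (aux_cont_sup.comp_continuousOn ((sol_cont hu).prodMk (sol_cont hv)))
    fun t ht => (S.hlat _ (hu.1 t ht) _ (hv.1 t ht)).1

lemma W_cont (S : AuxSetup X f H) {u v : ℝ → Fin n → ℝ} (hu : IsSolOn f X (Ici 0) u)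
    (hv : IsSolOn f X (Ici 0) v) : ContinuousOn (fun s => H (u s ⊓ v s)) (Ici 0) :=
  S.hH.continuousOn.comp (aux_cont_inf.comp_continuousOn ((sol_cont hu).prodMk (sol_cont hv)))
    fun t ht => (S.hlat _ (hu.1 t ht) _ (hv.1 t ht)).2

lemma V_anti (S : AuxSetup X f H) {u v : ℝ → Fin n → ℝ} (hu : IsSolOn f X (Ici 0) u)
    (hv : IsSolOn f X (Ici 0) v) {a b : ℝ} (ha : 0 ≤ a) (hab : a ≤ b) :
    H (u b ⊔ v b) ≤ H (u a ⊔ v a) := by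
  have hsub : Icc a b ⊆ Ici 0 := fun t ht => ha.trans ht.1
  have := aux_decr (V := fun s => H (u s ⊔ v s)) (k := 0) hab ((S.V_cont hu hv).mono hsub)
    (fun t ht => S.V_deriv hu hv (ha.trans ht.1)) (fun t ht => by
      have h0 : (0:ℝ) ≤ t := ha.trans ht.1
      have := S.DH_nonpos (S.hlat _ (hu.1 t h0) _ (hv.1 t h0)).1
        (fun i => S.mx_le (hu.1 t h0) (hv.1 t h0) i)
      simpa using this)
  simpa using this

lemma W_mono (S : AuxSetup X f H) {u v : ℝ → Fin n → ℝ} (hu : IsSolOn f X (Ici 0) u)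
    (hv : IsSolOn f X (Ici 0) v) {a b : ℝ} (ha : 0 ≤ a) (hab : a ≤ b) :
    H (u a ⊓ v a) ≤ H (u b ⊓ v b) := by
  have hsub : Icc a b ⊆ Ici 0 := fun t ht => ha.trans ht.1
  have := aux_decr (V := fun s => -H (u s ⊓ v s)) (k := 0) hab ((S.W_cont hu hv).neg.mono hsub)
    (fun t ht => (S.W_deriv hu hv (ha.trans ht.1)).neg) (fun t ht => by
      have h0 : (0:ℝ) ≤ t := ha.trans ht.1
      have := S.DH_nonneg (S.hlat _ (hu.1 t h0) _ (hv.1 t h0)).2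
        (fun i => S.le_mn (hu.1 t h0) (hv.1 t h0) i)
      simpa using this)
  simpa using this

lemma H_const (S : AuxSetup X f H) {u : ℝ → Fin n → ℝ} (hu : IsSolOn f X (Ici 0) u)
    {t : ℝ} (ht : 0 ≤ t) : H (u t) = H (u 0) := by
  apply le_antisymm
  · simpa using S.V_anti hu hu le_rfl ht
  · simpa using S.W_mono hu hu le_rfl ht

/-- Local estimate of solutions near a point. -/
lemma local_est (S : AuxSetup X f H) {p : Fin n → ℝ} (hp : p ∈ X) {ε ρ : ℝ} (hε : 0 < ε)
    (hρ : 0 < ρ) : ∃ r > 0, ∃ δ > 0, ∀ u : ℝ → Fin n → ℝ, IsSolOn f X (Ici 0) u → ∀ t, 0 ≤ t →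
      u t ∈ Metric.ball p r → ∀ s ∈ Icc 0 δ, u (t + s) ∈ Metric.ball p ρ ∧
        ‖u (t + s) - u t - s • f p‖ ≤ ε * s := by
  have hfc : ContinuousAt f p := S.hf.continuousOn.continuousAt (S.hX.mem_nhds hp)
  obtain ⟨ρ₁, hρ₁, hball⟩ := Metric.continuousAt_iff.1 hfc ε hε
  set R := min ρ ρ₁ with hR
  have hRpos : 0 < R := lt_min hρ hρ₁
  set M := ‖f p‖ + ε with hM
  have hMpos : 0 < M := by positivity
  refine ⟨R / 2, by positivity, R / (4 * M), by positivity, ?_⟩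
  intro u hu t ht hut
  have hshift : ∀ s, 0 ≤ s → HasDerivWithinAt (fun s => u (t + s) - u t - s • f p)
      (f (u (t + s)) - f p) (Ici s) s := by
    intro s hs
    have h1 : HasDerivWithinAt u (f (u (t + s))) (Ici (t + s)) (t + s) :=
      sol_right hu (Ici_subset_Ici.2 (by linarith))
    have h2 : HasDerivWithinAt (fun s => t + s) 1 (Ici s) s :=
      ((hasDerivAt_id s).const_add t).hasDerivWithinAt
    have h3 := HasDerivWithinAt.scomp s h1 h2 (fun y hy => by
      simp only [mem_Ici] at *; linarith)
    have h4 : HasDerivWithinAt (fun s : ℝ => s • f p) (f p) (Ici s) s := by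
      simpa using ((hasDerivAt_id s).smul_const (f p)).hasDerivWithinAt
    have h5 := (h3.sub_const (u t)).sub h4
    rw [one_smul] at h5
    exact h5
  have hc : ContinuousOn (fun s => u (t + s) - u t - s • f p) (Icc 0 (R / (4 * M))) := by
    refine ContinuousOn.sub (ContinuousOn.sub ?_ continuousOn_const) (by fun_prop)
    exact (sol_cont hu).comp (by fun_prop) (fun s hs => by
      have := hs.1; simp only [mem_Ici]; linarith)
  have hclose : ∀ s ∈ Icc 0 (R / (4 * M)), ‖u (t + s) - u t - s • f p‖ ≤ ε * s →
      dist (u (t + s)) p < R := by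
    intro s hs hn
    rw [mem_ball_iff_norm] at hut
    have e : u (t + s) - p = (u (t + s) - u t - s • f p) + (u t - p) + s • f p := by abel
    rw [dist_eq_norm, e]
    have h1 := norm_add₃_le (a := u (t + s) - u t - s • f p) (b := u t - p) (c := s • f p)
    have h2 : ‖s • f p‖ = s * ‖f p‖ := by rw [norm_smul, Real.norm_of_nonneg hs.1]
    have h3 : M * s ≤ R / 4 := by
      have := mul_le_mul_of_nonneg_left hs.2 hMpos.le
      have e2 : M * (R / (4 * M)) = R / 4 := by field_simp
      linarith
    have : M * s = ‖f p‖ * s + ε * s := by rw [hM]; ring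
    linarith
  have key := image_norm_le_of_norm_deriv_right_lt_deriv_boundary
    (f := fun s => u (t + s) - u t - s • f p) (f' := fun s => f (u (t + s)) - f p)
    (a := 0) (b := R / (4 * M)) (B := fun s => ε * s) (B' := fun _ => ε) hc
    (fun s hs => hshift s hs.1) (by simp)
    (fun s => by simpa using (hasDerivAt_id s).const_mul ε)
    (fun s hs he => by
      have := hclose s ⟨hs.1, hs.2.le⟩ he.le
      have := hball (lt_of_lt_of_le this (min_le_right _ _))
      rwa [dist_eq_norm] at this)
  intro s hs
  exact ⟨lt_of_lt_of_le (hclose s hs (key hs)) (min_le_left _ _), key hs⟩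

/-- Shifting limits along an ultrafilter. -/
lemma shift (S : AuxSetup X f H) {p : Fin n → ℝ} (hp : p ∈ X) {u : ℝ → Fin n → ℝ}
    (hu : IsSolOn f X (Ici 0) u) {F : Ultrafilter ℝ} (hF : (F : Filter ℝ) ≤ atTop)
    (hlim : Tendsto u F (𝓝 p)) {N : Set (Fin n → ℝ)} (hN : N ∈ 𝓝 p) {ε : ℝ} (hε : 0 < ε) :
    ∀ᶠ s in 𝓝[>] (0:ℝ), ∃ p' ∈ N, p' ∈ X ∧ Tendsto u (F.map (· + s)) (𝓝 p') ∧
      ‖p' - p - s • f p‖ ≤ ε * s := by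
  obtain ⟨ρ, hρ, hsub⟩ := Metric.nhds_basis_closedBall.mem_iff.1
    (Filter.inter_mem hN (S.hX.mem_nhds hp))
  obtain ⟨r, hr, δ, hδ, hest⟩ := S.local_est hp hε hρ
  filter_upwards [Ioc_mem_nhdsGT hδ] with s hs
  have hev : ∀ᶠ t in (F : Filter ℝ), u (t + s) ∈ Metric.ball p ρ ∧
        ‖u (t + s) - u t - s • f p‖ ≤ ε * s := by
    filter_upwards [hF (eventually_ge_atTop 0), hlim (Metric.ball_mem_nhds p hr)] with t h0 ht
    exact hest u hu t h0 ht s ⟨hs.1.le, hs.2⟩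
  obtain ⟨p', hp', hle⟩ := (isCompact_closedBall p ρ).ultrafilter_le_nhds
    (F.map (fun t => u (t + s))) (by
      rw [le_principal_iff]
      exact hev.mono fun t ht => Metric.ball_subset_closedBall ht.1)
  have hT : Tendsto (fun t => u (t + s)) F (𝓝 p') := hle
  refine ⟨p', (hsub hp').1, (hsub hp').2, ?_, ?_⟩
  · rw [Ultrafilter.coe_map, tendsto_map'_iff]; exact hT
  · exact le_of_tendsto ((hT.sub hlim).sub_const (s • f p)).norm (hev.mono fun t ht => ht.2)

end AuxSetup

namespace AuxSetup

variable {n : ℕ} {X : Set (Fin n → ℝ)} {f : (Fin n → ℝ) → (Fin n → ℝ)}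
    {H : (Fin n → ℝ) → ℝ}

lemma strict_near (S : AuxSetup X f H) {p q : Fin n → ℝ} (hp : p ∈ X) (hq : q ∈ X) {i : Fin n}
    (h1 : f p i < f (p ⊔ q) i) (h2 : q i < p i ∨ f q i < f (p ⊔ q) i) :
    ∃ κ > 0, ∀ᶠ w in 𝓝 (p, q), κ ≤ f (w.1 ⊔ w.2) i - auxMx f w.1 w.2 i ∧
      κ ≤ fderiv ℝ H (w.1 ⊔ w.2) (Pi.single i 1) := by
  have hz := (S.hlat p hp q hq).1
  have hfc : ∀ {x}, x ∈ X → ContinuousAt (fun y => f y i) x := fun hx =>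
    (continuousAt_pi.1 (S.hf.continuousOn.continuousAt (S.hX.mem_nhds hx))) i
  have hsup : ContinuousAt (fun w : (Fin n → ℝ) × (Fin n → ℝ) => w.1 ⊔ w.2) (p, q) :=
    aux_cont_sup.continuousAt
  have c0 : ContinuousAt (fun w : (Fin n → ℝ) × (Fin n → ℝ) => f (w.1 ⊔ w.2) i) (p, q) :=
    ContinuousAt.comp (g := fun y => f y i) (f := fun w : (Fin n → ℝ) × (Fin n → ℝ) => w.1 ⊔ w.2)
      (hfc hz) hsup
  have c1 : ContinuousAt (fun w : (Fin n → ℝ) × (Fin n → ℝ) => f w.1 i) (p, q) :=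
    ContinuousAt.comp (g := fun y => f y i) (f := fun w : (Fin n → ℝ) × (Fin n → ℝ) => w.1)
      (hfc hp) continuousAt_fst
  have c2 : ContinuousAt (fun w : (Fin n → ℝ) × (Fin n → ℝ) => f w.2 i) (p, q) :=
    ContinuousAt.comp (g := fun y => f y i) (f := fun w : (Fin n → ℝ) × (Fin n → ℝ) => w.2)
      (hfc hq) continuousAt_snd
  have cH : ContinuousAt (fun y => fderiv ℝ H y (Pi.single i 1)) (p ⊔ q) :=
    ((S.hH.continuousOn_fderiv_of_isOpen S.hX le_rfl).continuousAt (S.hX.mem_nhds hz)).clm_apply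
      continuousAt_const
  have c3 : ContinuousAt (fun w : (Fin n → ℝ) × (Fin n → ℝ) =>
      fderiv ℝ H (w.1 ⊔ w.2) (Pi.single i 1)) (p, q) :=
    ContinuousAt.comp (g := fun y => fderiv ℝ H y (Pi.single i 1))
      (f := fun w : (Fin n → ℝ) × (Fin n → ℝ) => w.1 ⊔ w.2) cH hsup
  have hg := S.hgrad _ hz i
  rcases h2 with h2 | h2
  · obtain ⟨κ, hκ, hκ'⟩ := exists_between (lt_min (sub_pos.2 h1) hg)
    refine ⟨κ, hκ, ?_⟩
    have e1 : ∀ᶠ w : (Fin n → ℝ) × (Fin n → ℝ) in 𝓝 (p, q), w.2 i < w.1 i :=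
      ContinuousAt.eventually_lt (by fun_prop) (by fun_prop) h2
    have e2 := (c0.sub c1).eventually_const_lt (lt_of_lt_of_le hκ' (min_le_left _ _))
    have e3 := c3.eventually_const_lt (lt_of_lt_of_le hκ' (min_le_right _ _))
    filter_upwards [e1, e2, e3] with w w1 w2 w3
    refine ⟨?_, w3.le⟩
    simp only [auxMx, w1, if_true]
    exact w2.le
  · obtain ⟨κ, hκ, hκ'⟩ := exists_between
      (lt_min (lt_min (sub_pos.2 h1) (sub_pos.2 h2)) hg)
    refine ⟨κ, hκ, ?_⟩
    have e1 := (c0.sub c2).eventually_const_lt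
      (lt_of_lt_of_le hκ' ((min_le_left _ _).trans (min_le_right _ _)))
    have e2 := (c0.sub c1).eventually_const_lt
      (lt_of_lt_of_le hκ' ((min_le_left _ _).trans (min_le_left _ _)))
    have e3 := c3.eventually_const_lt (lt_of_lt_of_le hκ' (min_le_right _ _))
    filter_upwards [e1, e2, e3] with w w1 w2 w3
    refine ⟨?_, w3.le⟩
    have : auxMx f w.1 w.2 i ≤ max (f w.1 i) (f w.2 i) := by
      unfold auxMx
      split_ifs
      · exact le_max_left _ _
      · exact le_max_right _ _
      · exact le_rfl
    simp only [Pi.sub_apply] at w1 w2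
    rcases le_max_iff.1 this with h | h <;> linarith

lemma V_lim (S : AuxSetup X f H) {u v : ℝ → Fin n → ℝ} (hu : IsSolOn f X (Ici 0) u)
    (hv : IsSolOn f X (Ici 0) v) : ∃ L, Tendsto (fun t => H (u t ⊔ v t)) atTop (𝓝 L) := by
  have hanti : Antitone (fun t => H (u (max t 0) ⊔ v (max t 0))) := fun a b hab =>
    S.V_anti hu hv (le_max_right _ _) (max_le_max_right 0 hab)
  have hb : BddBelow (range (fun t => H (u (max t 0) ⊔ v (max t 0)))) := by
    refine ⟨H (u 0), ?_⟩
    rintro _ ⟨t, rfl⟩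
    have h0 : (0:ℝ) ≤ max t 0 := le_max_right _ _
    rw [← S.H_const hu h0]
    exact S.le_H (hu.1 _ h0) (S.hlat _ (hu.1 _ h0) _ (hv.1 _ h0)).1 le_sup_left
  refine ⟨_, (tendsto_atTop_ciInf hanti hb).congr' ?_⟩
  filter_upwards [eventually_ge_atTop 0] with t ht
  simp [ht]

lemma no_strict (S : AuxSetup X f H) {u v : ℝ → Fin n → ℝ} (hu : IsSolOn f X (Ici 0) u)
    (hv : IsSolOn f X (Ici 0) v) {F : Ultrafilter ℝ} (hF : (F : Filter ℝ) ≤ atTop)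
    {p q : Fin n → ℝ} (hp : p ∈ X) (hq : q ∈ X)
    (hup : Tendsto u F (𝓝 p)) (hvq : Tendsto v F (𝓝 q)) {i : Fin n}
    (h1 : f p i < f (p ⊔ q) i) (h2 : q i < p i ∨ f q i < f (p ⊔ q) i) : False := by
  obtain ⟨κ, hκ, hev⟩ := S.strict_near hp hq h1 h2
  obtain ⟨ρ, hρ, hsub⟩ := Metric.nhds_basis_ball.mem_iff.1 hev
  obtain ⟨r, hr, δ, hδ, hest⟩ := S.local_est hp one_pos hρ
  obtain ⟨r', hr', δ', hδ', hest'⟩ := S.local_est hq one_pos hρ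
  set d := min δ δ' with hd
  have hdpos : 0 < d := lt_min hδ hδ'
  obtain ⟨L, hL⟩ := S.V_lim hu hv
  have hdec : ∀ᶠ t in (F : Filter ℝ),
      H (u (t + d) ⊔ v (t + d)) ≤ H (u t ⊔ v t) - κ * κ * d := by
    filter_upwards [hF (eventually_ge_atTop 0), hup (Metric.ball_mem_nhds p hr),
      hvq (Metric.ball_mem_nhds q hr')] with t h0 ht ht'
    have h0 : (0:ℝ) ≤ t := h0
    have hsub' : Icc t (t + d) ⊆ Ici 0 := fun s hs => h0.trans hs.1
    have := aux_decr (V := fun s => H (u s ⊔ v s)) (k := κ * κ) (by linarith : t ≤ t + d)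
      ((S.V_cont hu hv).mono hsub') (fun s hs => S.V_deriv hu hv (h0.trans hs.1)) (fun s hs => by
        have hs0 : (0:ℝ) ≤ s := h0.trans hs.1
        have a1 : s - t ∈ Icc 0 δ :=
          ⟨by linarith [hs.1], by linarith [hs.2, min_le_left δ δ']⟩
        have a2 : s - t ∈ Icc 0 δ' :=
          ⟨by linarith [hs.1], by linarith [hs.2, min_le_right δ δ']⟩
        have b1 := (hest u hu t h0 ht _ a1).1
        have b2 := (hest' v hv t h0 ht' _ a2).1
        rw [add_sub_cancel] at b1 b2
        have hmem : (u s, v s) ∈ Metric.ball (p, q) ρ := by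
          rw [← ball_prod_same]; exact ⟨b1, b2⟩
        obtain ⟨k1, k2⟩ := hsub hmem
        have := S.DH_le (S.hlat _ (hu.1 s hs0) _ (hv.1 s hs0)).1
          (fun i => S.mx_le (hu.1 s hs0) (hv.1 s hs0) i) i
        have hmul := mul_le_mul k1 k2 hκ.le (hκ.le.trans k1)
        simp only at hmul
        linarith)
    simpa using this
  have l1 : Tendsto (fun t => H (u t ⊔ v t) - κ * κ * d) F (𝓝 (L - κ * κ * d)) :=
    (hL.mono_left hF).sub_const _
  have l2 : Tendsto (fun t => H (u (t + d) ⊔ v (t + d))) F (𝓝 L) :=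
    (hL.comp (tendsto_atTop_add_const_right _ d tendsto_id)).mono_left hF
  have := le_of_tendsto_of_tendsto l2 l1 hdec
  have : 0 < κ * κ * d := by positivity
  linarith

/-- LaSalle principle for pairs of solutions. -/
lemma lasalle (S : AuxSetup X f H) {u v : ℝ → Fin n → ℝ} (hu : IsSolOn f X (Ici 0) u)
    (hv : IsSolOn f X (Ici 0) v) (huv : H (u 0) = H (v 0)) (k : ℕ) :
    ∀ (F : Ultrafilter ℝ), (F : Filter ℝ) ≤ atTop → ∀ p ∈ X, ∀ q ∈ X,
    Tendsto u F (𝓝 p) → Tendsto v F (𝓝 q) →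
    (Finset.univ.filter (fun i => p i = q i)).card = k → p = q := by
  induction k using Nat.strong_induction_on with
  | _ k ih =>
  intro F hF p hp q hq hup hvq hk
  by_contra hne
  have hlev : ∀ {w : ℝ → Fin n → ℝ} {x}, IsSolOn f X (Ici 0) w → x ∈ X → Tendsto w F (𝓝 x) →
      H x = H (w 0) := by
    intro w x hw hx hwx
    have h1 : Tendsto (fun t => H (w t)) F (𝓝 (H x)) :=
      (S.hH.continuousOn.continuousAt (S.hX.mem_nhds hx)).tendsto.comp hwx
    have h2 : Tendsto (fun t => H (w t)) F (𝓝 (H (w 0))) := by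
      refine tendsto_const_nhds.congr' ?_
      filter_upwards [hF (eventually_ge_atTop 0)] with t ht
      exact (S.H_const hw ht).symm
    exact tendsto_nhds_unique h1 h2
  have hpq : H p = H q := by rw [hlev hu hp hup, hlev hv hq hvq, huv]
  have hnle : ¬ p ≤ q := fun h => (aux_H_lt S.hX S.hoc S.hH S.hgrad hp hq h hne).ne hpq
  have hnge : ¬ q ≤ p := fun h =>
    (aux_H_lt S.hX S.hoc S.hH S.hgrad hq hp h (Ne.symm hne)).ne hpq.symm
  obtain ⟨a, ha⟩ : ∃ a, q a < p a := by
    by_contra h; push Not at h; exact hnle h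
  obtain ⟨b, hb⟩ : ∃ b, p b < q b := by
    by_contra h; push Not at h; exact hnge h
  obtain ⟨i, hi, j, hj, hij⟩ := S.hirr p hp {i | q i ≤ p i} ⟨a, ha.le⟩
    (fun h => by
      have : b ∈ {i | q i ≤ p i} := by rw [h]; trivial
      exact absurd this (not_le.2 hb))
  simp only [mem_ofPred_eq, not_le] at hi hj
  have hz := (S.hlat p hp q hq).1
  have h1 : f p i < f (p ⊔ q) i :=
    (aux_kamke S.hX S.hoc S.hf S.hcoop hp hz le_sup_left (by simp [hi])).2 j hij (by simp [hj])
  by_cases h2 : q i < p i ∨ f q i < f (p ⊔ q) i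
  · exact S.no_strict hu hv hF hp hq hup hvq h1 h2
  push Not at h2
  have hie : p i = q i := le_antisymm h2.1 hi
  have hlt : f p i < f q i := h1.trans_le h2.2
  set ε := (f q i - f p i) / 3 with hε
  have hεpos : 0 < ε := by rw [hε]; linarith
  -- neighbourhoods preserving the strict signs
  have hnhds : ∀ᶠ w : (Fin n → ℝ) × (Fin n → ℝ) in 𝓝 (p, q), ∀ l, p l ≠ q l → w.1 l ≠ w.2 l := by
    rw [eventually_all]
    intro l
    by_cases hl : p l = q l
    · simp [hl]
    · have c1 : ContinuousAt (fun w : (Fin n → ℝ) × (Fin n → ℝ) => w.1 l) (p, q) := by fun_prop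
      have c2 : ContinuousAt (fun w : (Fin n → ℝ) × (Fin n → ℝ) => w.2 l) (p, q) := by fun_prop
      exact ((c1.sub c2).eventually_ne (sub_ne_zero.2 hl)).mono fun w hw _ => sub_ne_zero.1 hw
  rw [nhds_prod_eq, eventually_prod_iff] at hnhds
  obtain ⟨Pa, hPa, Pb, hPb, hP⟩ := hnhds
  have e1 := S.shift hp hu hF hup hPa hεpos
  have e2 := S.shift hq hv hF hvq hPb hεpos
  obtain ⟨s, ⟨⟨p', hp'N, hp'X, hup', hp'e⟩, ⟨q', hq'N, hq'X, hvq', hq'e⟩⟩, hs⟩ :=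
    ((e1.and e2).and self_mem_nhdsWithin).exists
  have hs : (0:ℝ) < s := hs
  have hF' : ((F.map (· + s) : Ultrafilter ℝ) : Filter ℝ) ≤ atTop := by
    rw [Ultrafilter.coe_map]
    exact (tendsto_atTop_add_const_right _ s tendsto_id).mono_left hF
  have hsgn := hP hp'N hq'N
  have hi' : p' i ≠ q' i := by
    have x1 := (norm_le_pi_norm (p' - p - s • f p) i).trans hp'e
    have x2 := (norm_le_pi_norm (q' - q - s • f q) i).trans hq'e
    simp only [Pi.sub_apply, Pi.smul_apply, smul_eq_mul, Real.norm_eq_abs] at x1 x2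
    have x1 := (abs_le.1 x1).2
    have x2 := (abs_le.1 x2).1
    have : 3 * (ε * s) = s * f q i - s * f p i := by rw [hε]; ring
    have : 0 < ε * s := by positivity
    intro h
    linarith
  have hcard : (Finset.univ.filter (fun i => p' i = q' i)).card < k := by
    rw [← hk]
    apply Finset.card_lt_card
    rw [Finset.ssubset_iff_of_subset]
    · exact ⟨i, by simp [hie], by simp [hi']⟩
    · intro l hl
      simp only [Finset.mem_filter, Finset.mem_univ, true_and] at hl ⊢
      by_contra h
      exact hsgn l h hl
  have := ih _ hcard _ hF' p' hp'X q' hq'X hup' hvq' rfl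
  exact hi' (by rw [this])

lemma const_sol {y : Fin n → ℝ} (hy : y ∈ X) (hfy : f y = 0) :
    IsSolOn f X (Ici 0) (fun _ => y) :=
  ⟨fun _ _ => hy, fun t _ => by rw [hfy]; exact hasDerivWithinAt_const t _ y⟩

/-- Points of `X` that are `m`-close in the sense of `H` to a point near `y` are close to `y`. -/
lemma sep (S : AuxSetup X f H) {y : Fin n → ℝ} (hy : y ∈ X) :
    ∃ R > 0, Metric.closedBall y R ⊆ X ∧ ∃ m > 0, ∀ᶠ q in 𝓝 y, ∀ p ∈ X,
      H (p ⊔ q) - H (p ⊓ q) < m → p ∈ Metric.closedBall y R := by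
  obtain ⟨R, hR, hsub⟩ := Metric.nhds_basis_closedBall.mem_iff.1 (S.hX.mem_nhds hy)
  refine ⟨R, hR, hsub, ?_⟩
  set ρ := R / 2 with hρ
  have hρpos : 0 < ρ := by positivity
  have hin : ∀ q ∈ Metric.closedBall y ρ, ∀ i : Fin n, ∀ a : ℝ, |a| ≤ ρ →
      q + Pi.single i a ∈ X := by
    intro q hq i a ha
    apply hsub
    rw [mem_closedBall_iff_norm] at *
    have e : q + Pi.single i a - y = (q - y) + Pi.single i a := by abel
    rw [e]
    refine (norm_add_le _ _).trans ?_
    have : ‖(Pi.single i a : Fin n → ℝ)‖ ≤ ρ := by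
      rw [pi_norm_le_iff_of_nonneg hρpos.le]
      intro j
      by_cases hj : j = i
      · subst hj; simpa using ha
      · simp [hj, hρpos.le]
    linarith
  have hyb : y ∈ Metric.closedBall y ρ := Metric.mem_closedBall_self hρpos.le
  have habs : |ρ| ≤ ρ := (abs_of_pos hρpos).le
  have habs' : |-ρ| ≤ ρ := by rw [abs_neg]; exact habs
  have hle1 : ∀ (q : Fin n → ℝ) i, q ≤ q + Pi.single i ρ := fun q i => by
    have : (0 : Fin n → ℝ) ≤ Pi.single i ρ := Pi.single_nonneg.2 hρpos.le
    simpa using this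
  have hle2 : ∀ (q : Fin n → ℝ) i, q + Pi.single i (-ρ) ≤ q := fun q i => by
    have : (Pi.single i (-ρ) : Fin n → ℝ) ≤ 0 := by
      intro j
      by_cases hj : j = i
      · subst hj; simpa using hρpos.le
      · simp [hj]
    simpa using this
  have hm : ∃ m > 0, ∀ i : Fin n, m < H (y + Pi.single i ρ) - H y ∧
      m < H y - H (y + Pi.single i (-ρ)) := by
    have : ∀ᶠ m in 𝓝[>] (0:ℝ), ∀ i : Fin n, m < H (y + Pi.single i ρ) - H y ∧
      m < H y - H (y + Pi.single i (-ρ)) := by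
      rw [eventually_all]
      intro i
      refine (eventually_nhdsWithin_of_eventually_nhds (eventually_lt_nhds ?_)).and
        (eventually_nhdsWithin_of_eventually_nhds (eventually_lt_nhds ?_))
      · rw [sub_pos]
        refine aux_H_lt S.hX S.hoc S.hH S.hgrad hy (hin y hyb i ρ habs) (hle1 y i) ?_
        intro h
        have := congrFun h i
        simp at this; linarith
      · rw [sub_pos]
        refine aux_H_lt S.hX S.hoc S.hH S.hgrad (hin y hyb i (-ρ) habs') hy (hle2 y i) ?_
        intro h
        have := congrFun h i
        simp at this; linarith
    obtain ⟨m, h1, h2⟩ := (this.and self_mem_nhdsWithin).exists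
    exact ⟨m, h2, h1⟩
  obtain ⟨m, hmpos, hm⟩ := hm
  refine ⟨m, hmpos, ?_⟩
  have hHc : ∀ {x}, x ∈ X → ContinuousAt H x := fun hx =>
    S.hH.continuousOn.continuousAt (S.hX.mem_nhds hx)
  have hsh : ∀ i : Fin n, ∀ a : ℝ, |a| ≤ ρ →
      ContinuousAt (fun q : Fin n → ℝ => H (q + Pi.single i a)) y := by
    intro i a ha
    have hc : ContinuousAt (fun q : Fin n → ℝ => q + Pi.single i a) y := by fun_prop
    exact (hHc (hin y hyb i a ha)).tendsto.comp hc.tendsto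
  have hev : ∀ᶠ q in 𝓝 y, ∀ i : Fin n, m < H (q + Pi.single i ρ) - H q ∧
      m < H q - H (q + Pi.single i (-ρ)) := by
    rw [eventually_all]
    intro i
    exact (((hsh i ρ habs).sub (hHc hy)).eventually_const_lt (hm i).1).and
      (((hHc hy).sub (hsh i (-ρ) habs')).eventually_const_lt (hm i).2)
  filter_upwards [hev, Metric.closedBall_mem_nhds y hρpos] with q hq hqb p hp hD
  have hqX : q ∈ X := hsub (Metric.closedBall_subset_closedBall (by linarith) hqb)
  have hl := S.hlat p hp q hqX
  have hpq : dist p q ≤ ρ := by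
    by_contra hcon
    rw [dist_pi_le_iff hρpos.le] at hcon
    push Not at hcon
    obtain ⟨i, hi⟩ := hcon
    rw [Real.dist_eq, lt_abs] at hi
    rcases hi with hi | hi
    · have h1 : q + Pi.single i ρ ≤ p ⊔ q := by
        intro j
        by_cases hj : j = i
        · subst hj
          simp only [Pi.add_apply, Pi.single_eq_same, Pi.sup_apply]
          exact le_max_of_le_left (by linarith)
        · simp [hj]
      have := S.le_H (hin q hqb i ρ habs) hl.1 h1
      have := S.le_H hl.2 hqX inf_le_right
      linarith [(hq i).1]
    · have h1 : p ⊓ q ≤ q + Pi.single i (-ρ) := by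
        intro j
        by_cases hj : j = i
        · subst hj
          simp only [Pi.add_apply, Pi.single_eq_same, Pi.inf_apply]
          exact min_le_of_left_le (by linarith)
        · simp [hj]
      have := S.le_H hl.2 (hin q hqb i (-ρ) habs') h1
      have := S.le_H hqX hl.1 le_sup_right
      linarith [(hq i).2]
  rw [Metric.mem_closedBall] at *
  linarith [dist_triangle p q y]

/-- The basin of attraction of an equilibrium is uniformly open. -/
lemma basin (S : AuxSetup X f H) {y : Fin n → ℝ} (hy : y ∈ X) (hfy : f y = 0) :
    ∃ m > 0, ∀ u v : ℝ → Fin n → ℝ, IsSolOn f X (Ici 0) u → IsSolOn f X (Ici 0) v →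
      H (u 0) = H y → Tendsto v atTop (𝓝 y) → H (u 0 ⊔ v 0) - H (u 0 ⊓ v 0) < m →
      Tendsto u atTop (𝓝 y) := by
  obtain ⟨R, hR, hsub, m, hm, hev⟩ := S.sep hy
  refine ⟨m, hm, ?_⟩
  intro u v hu hv huy hvy hD
  rw [tendsto_iff_ultrafilter]
  intro F hF
  have hmem : ∀ᶠ t in (F : Filter ℝ), u t ∈ Metric.closedBall y R := by
    filter_upwards [hF (eventually_ge_atTop 0), hF (hvy.eventually hev)] with t h0 ht
    apply ht _ (hu.1 t h0)
    have := S.V_anti hu hv le_rfl h0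
    have := S.W_mono hu hv le_rfl h0
    linarith
  obtain ⟨p, hp, hle⟩ := (isCompact_closedBall y R).ultrafilter_le_nhds
    (F.map u) (by rw [le_principal_iff]; exact hmem)
  have := S.lasalle hu (const_sol hy hfy) huy _ F hF p (hsub hp) y hy hle tendsto_const_nhds rfl
  rw [this] at hle
  exact hle

end AuxSetup

/-- A two-parameter family joining `a` and `b` inside the order interval they span. -/
def auxP {n : ℕ} (a b : Fin n → ℝ) (s t : ℝ) : Fin n → ℝ :=
  fun i => a i - s * max (a i - b i) 0 + t * max (b i - a i) 0

lemma auxP_mono {n : ℕ} (a b : Fin n → ℝ) {s s' t t' : ℝ} (hs : s' ≤ s) (ht : t ≤ t') :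
    auxP a b s t ≤ auxP a b s' t' := by
  intro i
  have h1 := mul_le_mul_of_nonneg_right hs (le_max_right (a i - b i) 0)
  have h2 := mul_le_mul_of_nonneg_right ht (le_max_right (b i - a i) 0)
  simp only [auxP]
  linarith

lemma auxP_zero {n : ℕ} (a b : Fin n → ℝ) : auxP a b 0 0 = a := by
  ext i; simp [auxP]

lemma auxP_one {n : ℕ} (a b : Fin n → ℝ) : auxP a b 1 1 = b := by
  ext i
  simp only [auxP]
  rcases le_total (a i) (b i) with h | h
  · rw [max_eq_right (by linarith), max_eq_left (by linarith)]; ring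
  · rw [max_eq_left (by linarith), max_eq_right (by linarith)]; ring

lemma auxP_zero_one {n : ℕ} (a b : Fin n → ℝ) : auxP a b 0 1 = a ⊔ b := by
  ext i
  simp only [auxP, Pi.sup_apply]
  rcases le_total (a i) (b i) with h | h
  · rw [max_eq_left (a := b i - a i) (by linarith), sup_eq_right.2 h]; ring
  · rw [max_eq_right (a := b i - a i) (by linarith), sup_eq_left.2 h]; ring

lemma auxP_one_zero {n : ℕ} (a b : Fin n → ℝ) : auxP a b 1 0 = a ⊓ b := by
  ext i
  simp only [auxP, Pi.inf_apply]
  rcases le_total (a i) (b i) with h | h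
  · rw [max_eq_right (by linarith), inf_eq_left.2 h]; ring
  · rw [max_eq_left (by linarith), inf_eq_right.2 h]; ring

lemma AuxSetup.chain {n : ℕ} {X : Set (Fin n → ℝ)} {f : (Fin n → ℝ) → (Fin n → ℝ)}
    {H : (Fin n → ℝ) → ℝ} (S : AuxSetup X f H) {a b : Fin n → ℝ} (ha : a ∈ X) (hb : b ∈ X)
    (hab : H a = H b) {m : ℝ} (hm : 0 < m) (Q : (Fin n → ℝ) → Prop) (hQ : Q a)
    (hstep : ∀ p ∈ X, ∀ q ∈ X, H p = H a → H q = H a → Q p → H (q ⊔ p) - H (q ⊓ p) < m → Q q) :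
    Q b := by
  have hl := S.hlat a ha b hb
  have hPX : ∀ s ∈ Icc (0:ℝ) 1, ∀ t ∈ Icc (0:ℝ) 1, auxP a b s t ∈ X := by
    intro s hs t ht
    apply S.hoc _ hl.2 _ hl.1 (inf_le_left.trans le_sup_left)
    rw [← auxP_one_zero, ← auxP_zero_one]
    exact ⟨auxP_mono a b hs.2 ht.1, auxP_mono a b hs.1 ht.2⟩
  have hPc : Continuous (fun w : ℝ × ℝ => auxP a b w.1 w.2) := by
    refine continuous_pi fun i => ?_
    simp only [auxP]
    fun_prop
  have hGc : ContinuousOn (fun w : ℝ × ℝ => H (auxP a b w.1 w.2)) (Icc 0 1 ×ˢ Icc 0 1) :=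
    S.hH.continuousOn.comp hPc.continuousOn (fun w hw => hPX _ hw.1 _ hw.2)
  obtain ⟨δ, hδ, hunif⟩ := Metric.uniformContinuousOn_iff.1
    ((isCompact_Icc.prod isCompact_Icc).uniformContinuousOn_of_continuous hGc) (m / 2) (by positivity)
  -- one step
  have hone : ∀ s ∈ Icc (0:ℝ) 1, ∀ s' ∈ Icc (0:ℝ) 1, s ≤ s' → s' - s < δ →
      ∀ t ∈ Icc (0:ℝ) 1, ∀ t' ∈ Icc (0:ℝ) 1, H (auxP a b s t) = H a → H (auxP a b s' t') = H a →
      Q (auxP a b s t) → Q (auxP a b s' t') := by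
    intro s hs s' hs' hss hsd t ht t' ht' h1 h2 hq
    have hst := hPX s hs t ht
    have hst' := hPX s' hs' t' ht'
    refine hstep _ hst _ hst' h1 h2 hq ?_
    have hl2 := S.hlat _ hst' _ hst
    have hu1 : ∀ r ∈ Icc (0:ℝ) 1, H (auxP a b s r) - H (auxP a b s' r) < m / 2 := by
      intro r hr
      have := hunif (s, r) ⟨hs, hr⟩ (s', r) ⟨hs', hr⟩ (by
        rw [Prod.dist_eq]
        simp only [dist_self, Real.dist_eq]
        rw [abs_sub_comm, abs_of_nonneg (by linarith)]
        exact max_lt hsd hδ)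
      rw [Real.dist_eq] at this
      exact (abs_lt.1 this).2
    rcases le_total t t' with htt | htt
    · have e1 : auxP a b s' t' ⊔ auxP a b s t ≤ auxP a b s t' :=
        sup_le (auxP_mono a b hss le_rfl) (auxP_mono a b le_rfl htt)
      have e2 : auxP a b s' t ≤ auxP a b s' t' ⊓ auxP a b s t :=
        le_inf (auxP_mono a b le_rfl htt) (auxP_mono a b hss le_rfl)
      have := S.le_H hl2.1 (hPX s hs t' ht') e1
      have := S.le_H (hPX s' hs' t ht) hl2.2 e2
      have := hu1 t ht
      have := hu1 t' ht'
      linarith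
    · have e1 : auxP a b s' t' ⊔ auxP a b s t ≤ auxP a b s t :=
        sup_le (auxP_mono a b hss htt) le_rfl
      have e2 : auxP a b s' t' ≤ auxP a b s' t' ⊓ auxP a b s t :=
        le_inf le_rfl (auxP_mono a b hss htt)
      have := S.le_H hl2.1 hst e1
      have := S.le_H hst' hl2.2 e2
      linarith
  have hivt : ∀ s ∈ Icc (0:ℝ) 1, ∃ t ∈ Icc (0:ℝ) 1, H (auxP a b s t) = H a := by
    intro s hs
    have hc : ContinuousOn (fun t : ℝ => H (auxP a b s t)) (Icc 0 1) :=
      hGc.comp (f := fun t : ℝ => (s, t)) (by fun_prop) (fun t ht => ⟨hs, ht⟩)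
    have h0 : H (auxP a b s 0) ≤ H a := by
      apply S.le_H (hPX s hs 0 (by simp)) ha
      conv_rhs => rw [← auxP_zero a b]
      exact auxP_mono a b hs.1 le_rfl
    have h1 : H a ≤ H (auxP a b s 1) := by
      rw [hab]
      apply S.le_H hb (hPX s hs 1 (by simp))
      conv_lhs => rw [← auxP_one a b]
      exact auxP_mono a b hs.2 le_rfl
    obtain ⟨t, ht, he⟩ := intermediate_value_Icc (zero_le_one' ℝ) hc ⟨h0, h1⟩
    exact ⟨t, ht, he⟩
  obtain ⟨N, hN⟩ := exists_nat_one_div_lt hδ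
  have hN0 : (0:ℝ) < (N:ℝ) + 1 := by positivity
  have hmem : ∀ k : ℕ, k ≤ N + 1 → (k:ℝ) / ((N:ℝ) + 1) ∈ Icc (0:ℝ) 1 := by
    intro k hk
    refine ⟨by positivity, ?_⟩
    rw [div_le_one hN0]
    exact_mod_cast hk
  have hind : ∀ k : ℕ, k ≤ N + 1 → ∀ t ∈ Icc (0:ℝ) 1,
      H (auxP a b ((k:ℝ) / ((N:ℝ) + 1)) t) = H a → Q (auxP a b ((k:ℝ) / ((N:ℝ) + 1)) t) := by
    intro k
    induction k with
    | zero =>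
      intro _ t ht he
      simp only [Nat.cast_zero, zero_div] at he ⊢
      exact hone 0 (by simp) 0 (by simp) le_rfl (by simpa using hδ) 0 (by simp) t ht
        (by rw [auxP_zero]) he (by rwa [auxP_zero])
    | succ k ih =>
      intro hk t ht he
      have hk' : k ≤ N + 1 := by omega
      obtain ⟨r, hr, hre⟩ := hivt _ (hmem k hk')
      have hdiff : ((k + 1 : ℕ):ℝ) / ((N:ℝ) + 1) - (k:ℝ) / ((N:ℝ) + 1) = 1 / ((N:ℝ) + 1) := by
        push_cast; ring
      refine hone _ (hmem k hk') _ (hmem (k + 1) hk) ?_ (by rw [hdiff]; exact hN) r hr t ht hre he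
        (ih hk' r hr hre)
      have : 0 < 1 / ((N:ℝ) + 1) := by positivity
      linarith
  have hfin := hind (N + 1) le_rfl 1 (by simp)
  have h1 : ((N + 1 : ℕ):ℝ) / ((N:ℝ) + 1) = 1 := by
    push_cast; exact div_self hN0.ne'
  rw [h1, auxP_one] at hfin
  exact hfin hab.symm

/-- dichotomy on a level set on which all solutions are global:
either a unique equilibrium attracting everything, or no equilibrium and all
ω-limit sets empty. -/
theorem stmt_11 {n : ℕ} {X : Set (Fin n → ℝ)} (hX : IsOpen X) (hoc : orderConvex X)
    (hlat : ∀ x ∈ X, ∀ y ∈ X, x ⊔ y ∈ X ∧ x ⊓ y ∈ X)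
    {f : (Fin n → ℝ) → (Fin n → ℝ)} (hf : ContDiffOn ℝ 1 f X) (hcoop : coopVF f X)
    (hirr : ∀ x ∈ X, matIrred (jacMat f x))
    {H : (Fin n → ℝ) → ℝ} (hH : ContDiffOn ℝ 1 H X)
    (hfi : ∀ x ∈ X, fderiv ℝ H x (f x) = 0)
    (hgrad : ∀ x ∈ X, ∀ i, 0 < fderiv ℝ H x (Pi.single i 1))
    (c : ℝ) (γ : (Fin n → ℝ) → ℝ → (Fin n → ℝ))
    (hsol : ∀ x ∈ X, H x = c → IsSolOn f X (Set.Ici 0) (γ x) ∧ γ x 0 = x) :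
    Xor'
      (∃ y, y ∈ X ∧ H y = c ∧ f y = 0 ∧
        (∀ y', y' ∈ X → H y' = c → f y' = 0 → y' = y) ∧
        (∀ x, x ∈ X → H x = c → Tendsto (γ x) atTop (𝓝 y)))
      ((∀ y, y ∈ X → H y = c → f y ≠ 0) ∧
        (∀ x, x ∈ X → H x = c → omegaSet X (γ x) = ∅)) := by
  have S : AuxSetup X f H := ⟨hX, hoc, hlat, hf, hcoop, hirr, hH, hfi, hgrad⟩
  by_cases hex : ∃ y, y ∈ X ∧ H y = c ∧ f y = 0
  · obtain ⟨y, hy, hyc, hfy⟩ := hex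
    left
    refine ⟨⟨y, hy, hyc, hfy, ?_, ?_⟩, fun h => h.1 y hy hyc hfy⟩
    · intro y' hy' hyc' hfy'
      obtain ⟨F, hF⟩ := Ultrafilter.exists_le (atTop : Filter ℝ)
      exact S.lasalle (AuxSetup.const_sol hy' hfy') (AuxSetup.const_sol hy hfy)
        (hyc'.trans hyc.symm) _ F hF y' hy' y hy tendsto_const_nhds tendsto_const_nhds rfl
    · intro x hx hxc
      obtain ⟨m, hm, hb⟩ := S.basin hy hfy
      refine S.chain hy hx (hyc.trans hxc.symm) hm
        (fun p => Tendsto (γ p) atTop (𝓝 y)) ?_ ?_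
      · obtain ⟨h1, h2⟩ := hsol y hy hyc
        refine hb (γ y) (fun _ => y) h1 (AuxSetup.const_sol hy hfy) (by rw [h2])
          tendsto_const_nhds (by simpa [h2] using hm)
      · intro p hp q hq hpc hqc hQ hD
        obtain ⟨h1, h2⟩ := hsol p hp (hpc.trans hyc)
        obtain ⟨h3, h4⟩ := hsol q hq (hqc.trans hyc)
        exact hb (γ q) (γ p) h3 h1 (by rw [h4, hqc]) hQ (by rw [h2, h4]; exact hD)
  · right
    have hno : ∀ y, y ∈ X → H y = c → f y ≠ 0 := fun y h1 h2 h3 => hex ⟨y, h1, h2, h3⟩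
    refine ⟨⟨hno, ?_⟩, ?_⟩
    · intro x hx hxc
      rw [Set.eq_empty_iff_forall_notMem]
      rintro p ⟨hp, t, ht, htp⟩
      obtain ⟨hu, hu0⟩ := hsol x hx hxc
      obtain ⟨F, hF⟩ := Ultrafilter.exists_le (map t atTop)
      have hFt : (F : Filter ℝ) ≤ atTop := hF.trans ht
      have hup : Tendsto (γ x) F (𝓝 p) := (tendsto_map'_iff.2 htp).mono_left hF
      have hpc : H p = c := by
        have h1 : Tendsto (fun t => H (γ x t)) F (𝓝 (H p)) :=
          (hH.continuousOn.continuousAt (hX.mem_nhds hp)).tendsto.comp hup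
        have h2 : Tendsto (fun t => H (γ x t)) F (𝓝 c) := by
          refine tendsto_const_nhds.congr' ?_
          filter_upwards [hFt (eventually_ge_atTop 0)] with t ht
          rw [S.H_const hu ht, hu0, hxc]
        exact tendsto_nhds_unique h1 h2
      have hfp : 0 < ‖f p‖ := norm_pos_iff.2 (hno p hp hpc)
      obtain ⟨s, ⟨q, -, hq, hqt, hqe⟩, hs⟩ :=
        ((S.shift hp hu hFt hup Filter.univ_mem (half_pos hfp)).and self_mem_nhdsWithin).exists
      have hs : (0:ℝ) < s := hs
      have hv : IsSolOn f X (Ici 0) (fun t => γ x (t + s)) := by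
        refine ⟨fun t ht => hu.1 _ (add_nonneg ht hs.le), fun t ht => ?_⟩
        have h2 : HasDerivWithinAt (fun t => t + s) 1 (Ici 0) t :=
          ((hasDerivAt_id t).add_const s).hasDerivWithinAt
        have h3 := HasDerivWithinAt.scomp t (hu.2 (t + s) (add_nonneg ht hs.le)) h2
          (fun y hy => add_nonneg hy hs.le)
        rw [one_smul] at h3
        exact h3
      have hvq : Tendsto (fun t => γ x (t + s)) F (𝓝 q) := by
        rw [Ultrafilter.coe_map, tendsto_map'_iff] at hqt
        exact hqt
      have heq := S.lasalle hu hv (by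
        simp only [zero_add]; rw [S.H_const hu hs.le]) _ F hFt p hp q hq hup hvq rfl
      rw [← heq, sub_self, zero_sub, norm_neg, norm_smul, Real.norm_of_nonneg hs.le] at hqe
      have : 0 < ‖f p‖ * s := by positivity
      linarith
    · rintro ⟨y, h1, h2, h3, -⟩
      exact hno y h1 h2 h3
end
end

section
/- Let f : ℝⁿ → ℝⁿ be a C¹ cooperative irreducible vector field admitting a C¹ first integral H : ℝⁿ → ℝ such that for some constants 0 < m ≤ M one has m ≤ ∂H/∂xᵢ(x) ≤ M for all i and all x ∈ ℝⁿ. Then every maximal solution of ẋ = f(x) is defined on all of [0,∞), and exactly one of the following holds: (a) for every x ∈ ℝⁿ the ω-limit set of the maximal solution starting at x is a singleton, and moreover any two distinct zeros of f are related by ≪; or (b) for every x ∈ ℝⁿ the ω-limit set of the maximal solution starting at x is empty. -/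
open Set Filter Topology

noncomputable section

namespace Stmt12

/-- solution on `[0,T]` -/
def SolT {n : ℕ} (f : (Fin n → ℝ) → (Fin n → ℝ)) (T : ℝ) (γ : ℝ → Fin n → ℝ) : Prop :=
  ∀ t ∈ Icc 0 T, HasDerivWithinAt γ (f (γ t)) (Icc 0 T) t

/-- the order distance -/
def DD {n : ℕ} (H : (Fin n → ℝ) → ℝ) (x y : Fin n → ℝ) : ℝ := H (x ⊔ y) - H (x ⊓ y)

variable {n : ℕ} {f : (Fin n → ℝ) → (Fin n → ℝ)}

lemma SolT.mono {T T' : ℝ} {γ : ℝ → Fin n → ℝ} (h : SolT f T γ) (hT : T' ≤ T) : SolT f T' γ :=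
  fun t ht => (h t ⟨ht.1, ht.2.trans hT⟩).mono (Icc_subset_Icc le_rfl hT)

lemma SolT.shift {T s : ℝ} {γ : ℝ → Fin n → ℝ} (h : SolT f T γ) (hs : 0 ≤ s) :
    SolT f (T - s) (fun t => γ (t + s)) := by
  intro t ht
  have h1 := h (t + s) ⟨by linarith [ht.1], by linarith [ht.2]⟩
  have h2 : HasDerivWithinAt (fun t : ℝ => t + s) 1 (Icc 0 (T - s)) t :=
    ((hasDerivAt_id t).add_const s).hasDerivWithinAt
  have h3 := h1.scomp (h := fun t : ℝ => t + s) t h2 (fun u hu => ⟨by linarith [hu.1], by linarith [hu.2]⟩)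
  simpa [Function.comp_def] using h3

lemma SolT.cont {T : ℝ} {γ : ℝ → Fin n → ℝ} (h : SolT f T γ) : ContinuousOn γ (Icc 0 T) :=
  fun t ht => (h t ht).continuousWithinAt

lemma clm_sum (L : (Fin n → ℝ) →L[ℝ] ℝ) (v : Fin n → ℝ) :
    L v = ∑ i, v i * L (Pi.single i 1) := by
  conv_lhs => rw [pi_eq_sum_univ' v]
  rw [map_sum]
  refine Finset.sum_congr rfl fun i _ => ?_
  rw [map_smul, smul_eq_mul]

lemma clm_sum' (L : (Fin n → ℝ) →L[ℝ] (Fin n → ℝ)) (v : Fin n → ℝ) (k : Fin n) :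
    L v k = ∑ i, v i * L (Pi.single i 1) k := by
  exact clm_sum ((ContinuousLinearMap.proj (R := ℝ) (φ := fun _ : Fin n => ℝ) k).comp L) v

lemma coord_fderiv (hf : ContDiff ℝ 1 f) (k : Fin n) (x : Fin n → ℝ) :
    HasFDerivAt (fun x => f x k)
      ((ContinuousLinearMap.proj (R := ℝ) (φ := fun _ : Fin n => ℝ) k).comp (fderiv ℝ f x)) x := by
  have h := ((hf.differentiable one_ne_zero) x).hasFDerivAt
  exact (ContinuousLinearMap.proj (R := ℝ) (φ := fun _ : Fin n => ℝ) k).hasFDerivAt.comp x h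

lemma quasi (hf : ContDiff ℝ 1 f) (hcoop : coopVF f Set.univ) {x y : Fin n → ℝ} (hxy : x ≤ y)
    {i : Fin n} (hi : x i = y i) : f x i ≤ f y i := by
  obtain ⟨z, -, hz⟩ := domain_mvt (f := fun x => f x i) (s := univ) (x := x) (y := y)
    (fun x _ => (coord_fderiv hf i x).hasFDerivWithinAt) convex_univ trivial trivial
  have : 0 ≤ f y i - f x i := by
    rw [hz]
    change 0 ≤ fderiv ℝ f z (y - x) i
    rw [clm_sum']
    refine Finset.sum_nonneg fun j _ => ?_
    by_cases hj : i = j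
    · subst hj; simp [hi]
    · exact mul_nonneg (by simpa using hxy j) (hcoop z trivial i j hj)
  linarith

lemma quasi_strict (hf : ContDiff ℝ 1 f) (hcoop : coopVF f Set.univ)
    (hirr : ∀ x, matIrred (jacMat f x)) {x y : Fin n → ℝ} (hxy : x ≤ y) (hne : x ≠ y)
    (hex : ∃ i, x i = y i) : ∃ i, x i = y i ∧ f x i < f y i := by
  obtain ⟨i, hi, j, hj, hij⟩ := hirr x {i | x i = y i} hex (by
    intro h
    apply hne
    funext i
    have : i ∈ {i | x i = y i} := h ▸ mem_univ i
    exact this)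
  refine ⟨i, hi, ?_⟩
  simp only [mem_ofPred_eq] at hi hj
  have hijne : i ≠ j := by rintro rfl; exact hj hi
  have hpos : 0 < fderiv ℝ f x (Pi.single j 1) i :=
    lt_of_le_of_ne (hcoop x trivial i j hijne) (Ne.symm hij)
  set d := fderiv ℝ f x (y - x) i with hd
  have hdpos : 0 < d := by
    rw [hd, clm_sum']
    refine Finset.sum_pos' (fun k _ => ?_) ⟨j, Finset.mem_univ _, ?_⟩
    · by_cases hk : i = k
      · subst hk; simp [hi]
      · exact mul_nonneg (by simpa using hxy k) (hcoop x trivial i k hk)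
    · exact mul_pos (by simpa using lt_of_le_of_ne (hxy j) hj) hpos
  have hder : HasDerivAt (fun s : ℝ => f (x + s • (y - x)) i) d 0 := by
    have h1 : HasDerivAt (fun s : ℝ => x + s • (y - x)) (y - x) 0 := by
      simpa using ((hasDerivAt_id (0:ℝ)).smul_const (y - x)).const_add x
    have h2 := coord_fderiv hf i (x + (0:ℝ) • (y - x))
    have h3 := h2.comp_hasDerivAt (0:ℝ) h1
    simpa [hd, Function.comp_def] using h3
  have hsl := hder.hasDerivWithinAt (s := Ioi 0)
  rw [hasDerivWithinAt_iff_tendsto_slope' (by simp)] at hsl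
  have hev := (hsl.eventually (lt_mem_nhds hdpos)).and (Ioo_mem_nhdsGT (show (0:ℝ) < 1 by norm_num))
  obtain ⟨s, hs1, hs2⟩ := hev.exists
  have hs3 : f x i < f (x + s • (y - x)) i := by
    rw [slope_def_field] at hs1
    have := (div_pos_iff_of_pos_right (by linarith [hs2.1])).1 hs1
    simpa using this
  refine hs3.trans_le (quasi hf hcoop ?_ ?_)
  · intro k
    have := hxy k
    simp only [Pi.add_apply, Pi.smul_apply, Pi.sub_apply, smul_eq_mul]
    nlinarith [hs2.1, hs2.2]
  · simp [hi]

lemma lip_ball (hf : ContDiff ℝ 1 f) (R : ℝ) : ∃ K : ℝ, 0 ≤ K ∧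
    ∀ x ∈ Metric.closedBall (0 : Fin n → ℝ) R, ∀ y ∈ Metric.closedBall (0 : Fin n → ℝ) R,
      ‖f x - f y‖ ≤ K * ‖x - y‖ := by
  obtain ⟨K, hK⟩ := (isCompact_closedBall (0 : Fin n → ℝ) R).exists_bound_of_continuousOn
    (hf.continuous_fderiv one_ne_zero).continuousOn
  refine ⟨max K 0, le_max_right _ _, fun x hx y hy => ?_⟩
  exact Convex.norm_image_sub_le_of_norm_fderiv_le (𝕜 := ℝ)
    (fun z _ => (hf.differentiable one_ne_zero) z)
    (fun z hz => (hK z hz).trans (le_max_left _ _)) (convex_closedBall _ _) hy hx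

lemma pos_sq_deriv (r : ℝ) : HasDerivAt (fun r : ℝ => (max r 0) ^ 2) (2 * max r 0) r := by
  rcases lt_trichotomy r 0 with h | h | h
  · have : (fun r : ℝ => (max r 0) ^ 2) =ᶠ[𝓝 r] fun _ => 0 := by
      filter_upwards [gt_mem_nhds h] with s hs
      simp [max_eq_right hs.le]
    rw [max_eq_right h.le, mul_zero]
    exact (hasDerivAt_const r (0:ℝ)).congr_of_eventuallyEq this
  · subst h
    simp only [max_self, mul_zero]
    rw [hasDerivAt_iff_isLittleO_nhds_zero]
    simp only [zero_add, max_self, smul_zero, sub_zero]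
    have h1 : (fun h : ℝ => h ^ 2) =o[𝓝 0] fun h => h := by
      simpa using Asymptotics.isLittleO_pow_id (𝕜 := ℝ) (n := 2) (by norm_num)
    refine Asymptotics.IsBigO.trans_isLittleO ?_ h1
    refine Asymptotics.IsBigO.of_bound 1 (Eventually.of_forall fun s => ?_)
    simp only [norm_pow, Real.norm_eq_abs, one_mul, ne_eq, OfNat.ofNat_ne_zero, not_false_eq_true,
      zero_pow, sub_zero]
    refine pow_le_pow_left₀ (abs_nonneg _) ?_ 2
    rcases le_total s 0 with h | h
    · simp [h]
    · simp [h]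
  · have : (fun r : ℝ => (max r 0) ^ 2) =ᶠ[𝓝 r] fun r => r ^ 2 := by
      filter_upwards [lt_mem_nhds h] with s hs
      simp [max_eq_left hs.le]
    rw [max_eq_left h.le]
    have h2 := hasDerivAt_pow 2 r
    exact (by simpa using h2 : HasDerivAt (fun r : ℝ => r ^ 2) (2 * r) r).congr_of_eventuallyEq this

lemma mono_sol (hf : ContDiff ℝ 1 f) (hcoop : coopVF f Set.univ) {T : ℝ} {a b : ℝ → Fin n → ℝ}
    (ha : SolT f T a) (hb : SolT f T b) (h0 : a 0 ≤ b 0) : ∀ t ∈ Icc 0 T, a t ≤ b t := by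
  obtain ⟨Ra, hRa⟩ := isCompact_Icc.exists_bound_of_continuousOn ha.cont
  obtain ⟨Rb, hRb⟩ := isCompact_Icc.exists_bound_of_continuousOn hb.cont
  obtain ⟨K, hK0, hK⟩ := lip_ball hf (max Ra Rb)
  set V : ℝ → ℝ := fun t => ∑ i, (max (a t i - b t i) 0) ^ 2 with hV
  set V' : ℝ → ℝ := fun t => ∑ i, 2 * max (a t i - b t i) 0 * (f (a t) i - f (b t) i) with hV'
  have hder : ∀ t ∈ Icc 0 T, HasDerivWithinAt V (V' t) (Icc 0 T) t := by
    intro t ht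
    refine HasDerivWithinAt.fun_sum fun i _ => ?_
    have h1 := (hasDerivWithinAt_pi.1 (ha t ht) i).sub (hasDerivWithinAt_pi.1 (hb t ht) i)
    exact (pos_sq_deriv (a t i - b t i)).comp_hasDerivWithinAt t h1
  have hbound : ∀ t ∈ Icc 0 T, V' t ≤ (2 * n * K) * V t := by
    intro t ht
    set p : Fin n → ℝ := fun i => max (a t i - b t i) 0 with hp
    have hp0 : ∀ i, 0 ≤ p i := fun i => le_max_right _ _
    have hpV : ‖p‖ ^ 2 ≤ V t := by
      have : ‖p‖ ≤ Real.sqrt (V t) := by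
        refine (pi_norm_le_iff_of_nonneg (Real.sqrt_nonneg _)).2 fun i => ?_
        refine Real.le_sqrt_of_sq_le ?_
        rw [Real.norm_eq_abs, sq_abs]
        exact Finset.single_le_sum (f := fun i => (p i) ^ 2) (fun i _ => sq_nonneg _) (Finset.mem_univ i)
      calc ‖p‖ ^ 2 ≤ (Real.sqrt (V t)) ^ 2 := by gcongr
        _ = V t := Real.sq_sqrt (Finset.sum_nonneg fun i _ => sq_nonneg _)
    have hball : ∀ u, a t ⊔ b t = u → u ∈ Metric.closedBall (0 : Fin n → ℝ) (max Ra Rb) := by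
      rintro u rfl
      have hR : 0 ≤ max Ra Rb := ((norm_nonneg _).trans (hRa t ht)).trans (le_max_left _ _)
      rw [mem_closedBall_zero_iff]
      refine (pi_norm_le_iff_of_nonneg hR).2 fun i => ?_
      have h1 := (norm_le_pi_norm (a t) i).trans ((hRa t ht).trans (le_max_left _ Rb))
      have h2 := (norm_le_pi_norm (b t) i).trans ((hRb t ht).trans (le_max_right Ra _))
      rw [Pi.sup_apply]
      rcases max_choice (a t i) (b t i) with h | h
      · exact (congrArg norm h).trans_le h1
      · exact (congrArg norm h).trans_le h2
    have hbb : b t ∈ Metric.closedBall (0 : Fin n → ℝ) (max Ra Rb) := by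
      rw [mem_closedBall_zero_iff]; exact (hRb t ht).trans (le_max_right Ra _)
    have hdiff : a t ⊔ b t - b t = p := by
      funext i
      simp only [Pi.sub_apply, Pi.sup_apply, hp]
      rcases le_total (a t i) (b t i) with h | h
      · simp [h]
      · simp [h]
    have hterm : ∀ i, 2 * p i * (f (a t) i - f (b t) i) ≤ 2 * K * ‖p‖ ^ 2 := by
      intro i
      rcases le_or_gt (a t i) (b t i) with h | h
      · have : p i = 0 := by simp [hp, h]
        rw [this]; simp; positivity
      · have h1 : f (a t) i ≤ f (a t ⊔ b t) i := quasi hf hcoop le_sup_left (by simp [h.le])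
        have h2 : f (a t ⊔ b t) i - f (b t) i ≤ K * ‖p‖ := by
          have := hK _ (hball _ rfl) _ hbb
          rw [hdiff] at this
          exact (le_abs_self _).trans ((norm_le_pi_norm (f (a t ⊔ b t) - f (b t)) i).trans this)
        have h3 : p i ≤ ‖p‖ := (le_abs_self _).trans (norm_le_pi_norm p i)
        have h4 : f (a t) i - f (b t) i ≤ K * ‖p‖ := by linarith
        calc 2 * p i * (f (a t) i - f (b t) i) ≤ 2 * p i * (K * ‖p‖) := by
              have := hp0 i
              gcongr
          _ ≤ 2 * ‖p‖ * (K * ‖p‖) := by gcongr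
          _ = _ := by ring
    calc V' t = ∑ i, 2 * p i * (f (a t) i - f (b t) i) := rfl
      _ ≤ ∑ i : Fin n, 2 * K * ‖p‖ ^ 2 := Finset.sum_le_sum fun i _ => hterm i
      _ = (2 * n * K) * ‖p‖ ^ 2 := by simp; ring
      _ ≤ _ := by gcongr
  have hV0 : V 0 ≤ 0 := by
    refine le_of_eq (Finset.sum_eq_zero fun i _ => ?_)
    have := h0 i
    simp [this]
  intro t ht
  have hG := le_gronwallBound_of_liminf_deriv_right_le (f := V) (f' := V') (δ := 0) (K := 2 * n * K)
    (ε := 0) (a := 0) (b := T) (fun t ht => (hder t ht).continuousWithinAt)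
    (fun t ht r hr => by
      have h1 : HasDerivWithinAt V (V' t) (Ici t) t :=
        (hder t ⟨ht.1, ht.2.le⟩).mono_of_mem_nhdsWithin (Icc_mem_nhdsGE_of_mem ht)
      exact h1.liminf_right_slope_le hr)
    hV0 (fun t ht => by simpa using hbound t ⟨ht.1, ht.2.le⟩) t ht
  rw [gronwallBound_ε0_δ0] at hG
  intro i
  have h1 : (max (a t i - b t i) 0) ^ 2 ≤ V t :=
    Finset.single_le_sum (f := fun i => (max (a t i - b t i) 0) ^ 2) (fun i _ => sq_nonneg _)
      (Finset.mem_univ i)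
  have h2 : max (a t i - b t i) 0 = 0 := by
    have := sq_nonneg (max (a t i - b t i) 0)
    exact pow_eq_zero_iff (two_ne_zero) |>.1 (by linarith)
  have := max_eq_right_iff.1 h2
  linarith

lemma uniq_sol (hf : ContDiff ℝ 1 f) (hcoop : coopVF f Set.univ) {T : ℝ} {a b : ℝ → Fin n → ℝ}
    (ha : SolT f T a) (hb : SolT f T b) (h0 : a 0 = b 0) : ∀ t ∈ Icc 0 T, a t = b t :=
  fun t ht => le_antisymm (mono_sol hf hcoop ha hb h0.le t ht) (mono_sol hf hcoop hb ha h0.ge t ht)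

variable {H : (Fin n → ℝ) → ℝ} {m M : ℝ}

lemma H_bounds (hH : ContDiff ℝ 1 H)
    (hg : ∀ x, ∀ i, m ≤ fderiv ℝ H x (Pi.single i 1) ∧ fderiv ℝ H x (Pi.single i 1) ≤ M)
    {x y : Fin n → ℝ} (hxy : x ≤ y) :
    m * ∑ i, (y i - x i) ≤ H y - H x ∧ H y - H x ≤ M * ∑ i, (y i - x i) := by
  obtain ⟨z, -, hz⟩ := domain_mvt (f := H) (s := univ) (x := x) (y := y)
    (fun x _ => ((hH.differentiable one_ne_zero) x).hasFDerivAt.hasFDerivWithinAt)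
    convex_univ trivial trivial
  rw [hz, clm_sum, Finset.mul_sum, Finset.mul_sum]
  constructor
  · refine Finset.sum_le_sum fun i _ => ?_
    have := hxy i
    rw [mul_comm m, Pi.sub_apply]
    exact mul_le_mul_of_nonneg_left (hg z i).1 (by linarith)
  · refine Finset.sum_le_sum fun i _ => ?_
    have := hxy i
    rw [mul_comm M, Pi.sub_apply]
    exact mul_le_mul_of_nonneg_left (hg z i).2 (by linarith)

lemma H_mono (hH : ContDiff ℝ 1 H) (hm : 0 < m)
    (hg : ∀ x, ∀ i, m ≤ fderiv ℝ H x (Pi.single i 1) ∧ fderiv ℝ H x (Pi.single i 1) ≤ M)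
    {x y : Fin n → ℝ} (hxy : x ≤ y) : H x ≤ H y := by
  have h1 := (H_bounds hH hg hxy).1
  have : 0 ≤ ∑ i, (y i - x i) := Finset.sum_nonneg fun i _ => by linarith [hxy i]
  nlinarith

lemma H_strict (hH : ContDiff ℝ 1 H) (hm : 0 < m)
    (hg : ∀ x, ∀ i, m ≤ fderiv ℝ H x (Pi.single i 1) ∧ fderiv ℝ H x (Pi.single i 1) ≤ M)
    {x y : Fin n → ℝ} (hxy : x ≤ y) (hne : x ≠ y) : H x < H y := by
  have h1 := (H_bounds hH hg hxy).1
  obtain ⟨i, hi⟩ := Function.ne_iff.1 hne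
  have : 0 < ∑ i, (y i - x i) :=
    Finset.sum_pos' (fun i _ => by linarith [hxy i])
      ⟨i, Finset.mem_univ _, sub_pos.2 (lt_of_le_of_ne (hxy i) hi)⟩
  nlinarith

lemma DD_bounds (hH : ContDiff ℝ 1 H) (hm : 0 < m) (hmM : m ≤ M)
    (hg : ∀ x, ∀ i, m ≤ fderiv ℝ H x (Pi.single i 1) ∧ fderiv ℝ H x (Pi.single i 1) ≤ M)
    (x y : Fin n → ℝ) :
    m * ‖x - y‖ ≤ DD H x y ∧ DD H x y ≤ M * n * ‖x - y‖ := by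
  have h := H_bounds hH hg (inf_le_sup (a := x) (b := y))
  have hs : ∀ i, (x ⊔ y) i - (x ⊓ y) i = |(x - y) i| := by
    intro i
    rw [Pi.sup_apply, Pi.inf_apply, sup_sub_inf_eq_abs_sub, Pi.sub_apply, abs_sub_comm]
  simp only [hs] at h
  have h0 : 0 ≤ ∑ i, |(x - y) i| := Finset.sum_nonneg fun i _ => abs_nonneg _
  constructor
  · refine le_trans ?_ h.1
    gcongr
    refine (pi_norm_le_iff_of_nonneg h0).2 fun i => ?_
    exact Finset.single_le_sum (f := fun i => |(x - y) i|) (fun i _ => abs_nonneg _) (Finset.mem_univ i)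
  · refine h.2.trans ?_
    rw [mul_assoc]
    have hM : 0 ≤ M := hm.le.trans hmM
    gcongr
    calc ∑ i, |(x - y) i| ≤ ∑ i : Fin n, ‖x - y‖ := Finset.sum_le_sum fun i _ => norm_le_pi_norm (x - y) i
      _ = _ := by simp

lemma DD_nonneg (hH : ContDiff ℝ 1 H) (hm : 0 < m) (hmM : m ≤ M)
    (hg : ∀ x, ∀ i, m ≤ fderiv ℝ H x (Pi.single i 1) ∧ fderiv ℝ H x (Pi.single i 1) ≤ M)
    (x y : Fin n → ℝ) : 0 ≤ DD H x y :=
  (mul_nonneg hm.le (norm_nonneg _)).trans (DD_bounds hH hm hmM hg x y).1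

lemma DD_cont (hH : ContDiff ℝ 1 H) : Continuous fun p : (Fin n → ℝ) × (Fin n → ℝ) => DD H p.1 p.2 := by
  have := hH.continuous
  unfold DD
  have h1 : Continuous fun p : (Fin n → ℝ) × (Fin n → ℝ) => p.1 ⊔ p.2 :=
    continuous_pi fun i => (((continuous_apply i).comp continuous_fst).sup
      ((continuous_apply i).comp continuous_snd))
  have h2 : Continuous fun p : (Fin n → ℝ) × (Fin n → ℝ) => p.1 ⊓ p.2 :=
    continuous_pi fun i => (((continuous_apply i).comp continuous_fst).inf
      ((continuous_apply i).comp continuous_snd))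
  exact (this.comp h1).sub (this.comp h2)

lemma H_const (hH : ContDiff ℝ 1 H) (hfi : ∀ x, fderiv ℝ H x (f x) = 0) {T : ℝ}
    {γ : ℝ → Fin n → ℝ} (h : SolT f T γ) {t : ℝ} (ht : t ∈ Icc 0 T) : H (γ t) = H (γ 0) := by
  have hd : ∀ t ∈ Icc 0 T, HasDerivWithinAt (fun t => H (γ t)) 0 (Icc 0 T) t := by
    intro t ht
    have := ((hH.differentiable one_ne_zero) (γ t)).hasFDerivAt.comp_hasDerivWithinAt t (h t ht)
    rw [hfi] at this
    exact this
  have := norm_image_sub_le_of_norm_deriv_le_segment' hd (C := 0) (by simp) t ht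
  rw [zero_mul] at this
  exact sub_eq_zero.1 (norm_le_zero_iff.1 this)

lemma strong (hf : ContDiff ℝ 1 f) (hcoop : coopVF f Set.univ)
    (hirr : ∀ x, matIrred (jacMat f x)) (hH : ContDiff ℝ 1 H)
    (hfi : ∀ x, fderiv ℝ H x (f x) = 0) (hm : 0 < m)
    (hg : ∀ x, ∀ i, m ≤ fderiv ℝ H x (Pi.single i 1) ∧ fderiv ℝ H x (Pi.single i 1) ≤ M)
    {T : ℝ} {a b : ℝ → Fin n → ℝ} (hT : 0 < T)
    (ha : SolT f T a) (hb : SolT f T b) (h0 : a 0 ≤ b 0) (hne : a 0 ≠ b 0) :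
    strLt (a T) (b T) := by
  have hmon := mono_sol hf hcoop ha hb h0
  have hTm : T ∈ Icc 0 T := ⟨hT.le, le_rfl⟩
  have hneT : a T ≠ b T := by
    intro h
    have h1 := H_const hH hfi ha hTm
    have h2 := H_const hH hfi hb hTm
    have h3 := H_strict hH hm hg h0 hne
    rw [h] at h1
    linarith
  by_contra hcon
  have hex : ∃ i, a T i = b T i := by
    simp only [strLt, not_forall, not_lt] at hcon
    obtain ⟨i, hi⟩ := hcon
    exact ⟨i, le_antisymm (hmon T hTm i) hi⟩
  obtain ⟨i, hi, hlt⟩ := quasi_strict hf hcoop hirr (hmon T hTm) hneT hex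
  have hd := (hasDerivWithinAt_pi.1 (hb T hTm) i).sub (hasDerivWithinAt_pi.1 (ha T hTm) i)
  have hd2 : HasDerivWithinAt (fun t => b t i - a t i) (f (b T) i - f (a T) i) (Ico 0 T) T :=
    hd.mono Ico_subset_Icc_self
  rw [hasDerivWithinAt_iff_tendsto_slope' (by simp)] at hd2
  have : (𝓝[Ico 0 T] T).NeBot := by
    rw [nhdsWithin_Ico_eq_nhdsLT hT]; infer_instance
  have hle := le_of_tendsto hd2 (b := 0) (by
    filter_upwards [self_mem_nhdsWithin] with t ht
    rw [slope_def_field]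
    have h1 := hmon t ⟨ht.1, ht.2.le⟩ i
    refine div_nonpos_of_nonneg_of_nonpos ?_ (by linarith [ht.2])
    linarith)
  linarith

lemma local_exist (hf : ContDiff ℝ 1 f) (x : Fin n → ℝ) :
    ∃ ε > 0, ∃ γ : ℝ → Fin n → ℝ, γ 0 = x ∧ SolT f ε γ := by
  obtain ⟨r, hr, ε, hε, h⟩ := hf.contDiffAt.exists_forall_mem_closedBall_exists_eq_forall_mem_Ioo_hasDerivAt (x₀ := x) (0:ℝ)
  obtain ⟨γ, h0, h⟩ := h x (by simp [hr.le])
  refine ⟨ε / 2, by positivity, γ, h0, fun t ht => (h t ?_).hasDerivWithinAt⟩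
  constructor <;> linarith [ht.1, ht.2]

lemma DD_step (hf : ContDiff ℝ 1 f) (hcoop : coopVF f Set.univ) (hH : ContDiff ℝ 1 H)
    (hfi : ∀ x, fderiv ℝ H x (f x) = 0) (hm : 0 < m)
    (hg : ∀ x, ∀ i, m ≤ fderiv ℝ H x (Pi.single i 1) ∧ fderiv ℝ H x (Pi.single i 1) ≤ M)
    {T : ℝ} {a b u l : ℝ → Fin n → ℝ} (ha : SolT f T a) (hb : SolT f T b)
    (hu : SolT f T u) (hl : SolT f T l) (hu0 : u 0 = a 0 ⊔ b 0) (hl0 : l 0 = a 0 ⊓ b 0)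
    {t : ℝ} (ht : t ∈ Icc 0 T) : DD H (a t) (b t) ≤ DD H (a 0) (b 0) := by
  have h1 := mono_sol hf hcoop ha hu (by rw [hu0]; exact le_sup_left) t ht
  have h2 := mono_sol hf hcoop hb hu (by rw [hu0]; exact le_sup_right) t ht
  have h3 := mono_sol hf hcoop hl ha (by rw [hl0]; exact inf_le_left) t ht
  have h4 := mono_sol hf hcoop hl hb (by rw [hl0]; exact inf_le_right) t ht
  have h5 := H_mono hH hm hg (sup_le h1 h2)
  have h6 := H_mono hH hm hg (le_inf h3 h4)
  have h7 := H_const hH hfi hu ht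
  have h8 := H_const hH hfi hl ht
  rw [hu0] at h7
  rw [hl0] at h8
  unfold DD
  linarith

lemma DD_anti (hf : ContDiff ℝ 1 f) (hcoop : coopVF f Set.univ) (hH : ContDiff ℝ 1 H)
    (hfi : ∀ x, fderiv ℝ H x (f x) = 0) (hm : 0 < m)
    (hg : ∀ x, ∀ i, m ≤ fderiv ℝ H x (Pi.single i 1) ∧ fderiv ℝ H x (Pi.single i 1) ≤ M)
    {T : ℝ} {a b : ℝ → Fin n → ℝ} (ha : SolT f T a) (hb : SolT f T b)
    {t : ℝ} (ht : t ∈ Icc 0 T) : DD H (a t) (b t) ≤ DD H (a 0) (b 0) := by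
  have hc : ContinuousOn (fun t => DD H (a t) (b t)) (Icc 0 T) :=
    (DD_cont hH).comp_continuousOn (ha.cont.prodMk hb.cont)
  have key : Icc 0 T ⊆ {t | DD H (a t) (b t) ≤ DD H (a 0) (b 0)} := by
    refine IsClosed.Icc_subset_of_forall_mem_nhdsWithin ?_ ?_ ?_
    · have := hc.preimage_isClosed_of_isClosed isClosed_Icc (isClosed_Iic (a := DD H (a 0) (b 0)))
      rwa [inter_comm] at this
    · exact le_refl (DD H (a 0) (b 0))
    · rintro s ⟨hs, hs1, hs2⟩
      obtain ⟨ε₁, hε₁, u, hu0, hu⟩ := local_exist hf (a s ⊔ b s)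
      obtain ⟨ε₂, hε₂, l, hl0, hl⟩ := local_exist hf (a s ⊓ b s)
      set ε := min (min ε₁ ε₂) (T - s) with hε
      have hεp : 0 < ε := lt_min (lt_min hε₁ hε₂) (by linarith)
      have hstep := fun t (ht : t ∈ Icc 0 ε) => DD_step (t := t) hf hcoop hH hfi hm hg
        ((ha.shift hs1).mono (min_le_right _ _ : ε ≤ T - s)) ((hb.shift hs1).mono (min_le_right _ _))
        (hu.mono ((min_le_left _ _).trans (min_le_left _ _)))
        (hl.mono ((min_le_left _ _).trans (min_le_right _ _)))
        (by simpa using hu0) (by simpa using hl0) ht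
      simp only [zero_add] at hstep
      filter_upwards [Ioo_mem_nhdsGT (show s < s + ε by linarith)] with r hr
      have := hstep (r - s) ⟨by linarith [hr.1], by linarith [hr.2]⟩
      rw [sub_add_cancel] at this
      exact this.trans hs
  exact key ht

lemma contract (hf : ContDiff ℝ 1 f) (hcoop : coopVF f Set.univ) (hH : ContDiff ℝ 1 H)
    (hfi : ∀ x, fderiv ℝ H x (f x) = 0) (hm : 0 < m) (hmM : m ≤ M)
    (hg : ∀ x, ∀ i, m ≤ fderiv ℝ H x (Pi.single i 1) ∧ fderiv ℝ H x (Pi.single i 1) ≤ M)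
    {T : ℝ} {a b : ℝ → Fin n → ℝ} (ha : SolT f T a) (hb : SolT f T b)
    {t : ℝ} (ht : t ∈ Icc 0 T) : ‖a t - b t‖ ≤ M * n / m * ‖a 0 - b 0‖ := by
  have h1 := DD_anti hf hcoop hH hfi hm hg ha hb ht
  have h2 := (DD_bounds hH hm hmM hg (a t) (b t)).1
  have h3 := (DD_bounds hH hm hmM hg (a 0) (b 0)).2
  rw [div_mul_eq_mul_div, le_div_iff₀ hm]
  linarith

lemma speed (hf : ContDiff ℝ 1 f) (hcoop : coopVF f Set.univ) (hH : ContDiff ℝ 1 H)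
    (hfi : ∀ x, fderiv ℝ H x (f x) = 0) (hm : 0 < m) (hmM : m ≤ M)
    (hg : ∀ x, ∀ i, m ≤ fderiv ℝ H x (Pi.single i 1) ∧ fderiv ℝ H x (Pi.single i 1) ≤ M)
    {T : ℝ} {γ : ℝ → Fin n → ℝ} (h : SolT f T γ) {t : ℝ} (ht : t ∈ Ico 0 T) :
    ‖f (γ t)‖ ≤ M * n / m * ‖f (γ 0)‖ := by
  have hT : 0 < T := ht.1.trans_lt ht.2
  have key : ∀ t ∈ Ico 0 T, Tendsto (fun s : ℝ => ‖s⁻¹ • (γ (s + t) - γ t)‖) (𝓝[>] 0) (𝓝 ‖f (γ t)‖) := by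
    intro t ht
    have h1 := (h.shift ht.1) 0 ⟨le_rfl, by linarith [ht.2]⟩
    have h2 : HasDerivWithinAt (fun s => γ (s + t)) (f (γ (0 + t))) (Ioi 0) 0 :=
      (h1.mono_of_mem_nhdsWithin (Icc_mem_nhdsGT (by linarith [ht.2])))
    rw [hasDerivWithinAt_iff_tendsto_slope' (by simp)] at h2
    simp only [zero_add] at h2
    refine (h2.norm).congr fun s => ?_
    simp [slope_def_module]
  refine le_of_tendsto_of_tendsto (key t ht) ((key 0 ⟨le_rfl, hT⟩).const_mul _) ?_
  filter_upwards [Ioo_mem_nhdsGT (show 0 < T - t by linarith [ht.2])] with s hs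
  have h3 := contract hf hcoop hH hfi hm hmM hg ((h.shift hs.1.le))
    (h.mono (by linarith [hs.1] : T - s ≤ T)) (t := t) ⟨ht.1, by linarith [hs.2]⟩
  simp only [zero_add] at h3
  rw [norm_smul, norm_smul, add_zero, add_comm s t]
  calc ‖s⁻¹‖ * ‖γ (t + s) - γ t‖ ≤ ‖s⁻¹‖ * (M * n / m * ‖γ s - γ 0‖) := by gcongr
    _ = _ := by ring

lemma exist_T (hf : ContDiff ℝ 1 f) (hcoop : coopVF f Set.univ) (hH : ContDiff ℝ 1 H)
    (hfi : ∀ x, fderiv ℝ H x (f x) = 0) (hm : 0 < m) (hmM : m ≤ M)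
    (hg : ∀ x, ∀ i, m ≤ fderiv ℝ H x (Pi.single i 1) ∧ fderiv ℝ H x (Pi.single i 1) ≤ M)
    (x : Fin n → ℝ) (T : ℝ) (hT : 0 ≤ T) : ∃ γ : ℝ → Fin n → ℝ, γ 0 = x ∧ SolT f T γ := by
  set C := M * n / m * ‖f x‖ with hC
  have hC0 : 0 ≤ C := by have := hm.trans_le hmM; positivity
  set R := ‖x‖ + C * T + 1 with hR
  have hRpos : 0 < R := by positivity
  let χ : ContDiffBump (0 : Fin n → ℝ) := ⟨R, R + 1, hRpos, by linarith⟩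
  set g : (Fin n → ℝ) → (Fin n → ℝ) := fun y => χ y • f y with hgdef
  have hgC : ContDiff ℝ 1 g := χ.contDiff.smul hf
  have hgs : HasCompactSupport g := χ.hasCompactSupport.smul_right
  obtain ⟨K, hK⟩ := hgC.lipschitzWith_of_hasCompactSupport hgs one_ne_zero
  obtain ⟨L, hL⟩ := hgC.continuous.bounded_above_of_compact_support hgs
  have hL0 : 0 ≤ L := (norm_nonneg _).trans (hL x)
  have hPL : IsPicardLindelof (fun _ => g) (tmin := 0) (tmax := T) ⟨0, le_rfl, hT⟩ x
      (L.toNNReal * T.toNNReal) 0 L.toNNReal K :=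
    { lipschitzOnWith := fun t _ => hK.lipschitzOnWith
      continuousOn := fun y _ => continuousOn_const
      norm_le := fun t _ y _ => (hL y).trans (Real.le_coe_toNNReal L)
      mul_max_le := by simp [hT, hL0] }
  obtain ⟨γ, h0, hγ⟩ := hPL.exists_eq_forall_mem_Icc_hasDerivWithinAt₀
  simp only at h0
  have hcont : ContinuousOn γ (Icc 0 T) := fun t ht => (hγ t ht).continuousWithinAt
  have hfg : ∀ y, ‖y‖ ≤ R → g y = f y := by
    intro y hy
    have : χ y = 1 := χ.one_of_mem_closedBall (by simpa [χ] using hy)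
    simp [hgdef, this]
  have hbd : ∀ t ∈ Icc 0 T, ‖γ t‖ < R := by
    by_contra hcon
    push Not at hcon
    have hcl : IsClosed (Icc 0 T ∩ (fun t => ‖γ t‖) ⁻¹' Ici R) :=
      hcont.norm.preimage_isClosed_of_isClosed isClosed_Icc isClosed_Ici
    have hcpt : IsCompact (Icc 0 T ∩ (fun t => ‖γ t‖) ⁻¹' Ici R) :=
      isCompact_Icc.of_isClosed_subset hcl inter_subset_left
    obtain ⟨t, ⟨ht, htR⟩, hmin⟩ := hcpt.exists_isLeast (by
      obtain ⟨t, ht, htR⟩ := hcon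
      exact ⟨t, ht, htR⟩)
    have hlt : ∀ s ∈ Ico 0 t, ‖γ s‖ < R := by
      intro s hs
      by_contra hc
      have := hmin ⟨⟨hs.1, hs.2.le.trans ht.2⟩, not_lt.1 hc⟩
      linarith [hs.2]
    have hle : ∀ t' < t, SolT f t' γ := by
      intro t' ht' s hs
      have := (hγ s ⟨hs.1, hs.2.trans (ht'.le.trans ht.2)⟩).mono
        (Icc_subset_Icc le_rfl (ht'.le.trans ht.2) : Icc 0 t' ⊆ Icc 0 T)
      rwa [hfg _ (hlt s ⟨hs.1, hs.2.trans_lt ht'⟩).le] at this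
    have hest := norm_image_sub_le_of_norm_deriv_le_segment' (f := γ) (a := 0) (b := t) (C := C)
      (f' := fun s => g (γ s))
      (fun s hs => (hγ s ⟨hs.1, hs.2.trans ht.2⟩).mono (Icc_subset_Icc le_rfl ht.2))
      (fun s hs => by
        rw [hfg _ (hlt s hs).le]
        have h1 : (s + t) / 2 < t := by linarith [hs.2]
        have := speed hf hcoop hH hfi hm hmM hg (hle _ h1) (t := s) ⟨hs.1, by linarith [hs.2]⟩
        rwa [h0] at this) t ⟨ht.1, le_rfl⟩
    rw [h0, sub_zero] at hest
    have h2 : ‖γ t‖ ≤ ‖x‖ + ‖γ t - x‖ := by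
      simpa using norm_add_le x (γ t - x)
    have h3 : C * t ≤ C * T := mul_le_mul_of_nonneg_left ht.2 hC0
    have h4 : R ≤ ‖γ t‖ := htR
    linarith
  refine ⟨γ, h0, fun t ht => ?_⟩
  have := hγ t ht
  rwa [hfg _ (hbd t ht).le] at this

lemma exist_global (hf : ContDiff ℝ 1 f) (hcoop : coopVF f Set.univ) (hH : ContDiff ℝ 1 H)
    (hfi : ∀ x, fderiv ℝ H x (f x) = 0) (hm : 0 < m) (hmM : m ≤ M)
    (hg : ∀ x, ∀ i, m ≤ fderiv ℝ H x (Pi.single i 1) ∧ fderiv ℝ H x (Pi.single i 1) ≤ M)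
    (x : Fin n → ℝ) : ∃ γ : ℝ → Fin n → ℝ, IsSolOn f Set.univ (Set.Ici 0) γ ∧ γ 0 = x := by
  choose G hG0 hG using fun N : ℕ => exist_T hf hcoop hH hfi hm hmM hg x (N : ℝ) N.cast_nonneg
  have heq : ∀ (A B : ℕ) (t : ℝ), 0 ≤ t → t ≤ A → t ≤ B → G A t = G B t := fun A B t h0 hA hB =>
    uniq_sol hf hcoop ((hG A).mono hA) ((hG B).mono hB) ((hG0 A).trans (hG0 B).symm) t ⟨h0, le_rfl⟩
  have hval : ∀ (B : ℕ) (t : ℝ), 0 ≤ t → t ≤ B → G (⌈t⌉₊) t = G B t := fun B t h0 hB =>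
    heq _ _ t h0 (Nat.le_ceil t) hB
  refine ⟨fun t => G (⌈t⌉₊) t, ⟨fun _ _ => trivial, fun t ht => ?_⟩, ?_⟩
  · have ht0 : 0 ≤ t := ht
    have htB : t < ((⌈t⌉₊ + 1 : ℕ) : ℝ) := by push_cast; linarith [Nat.le_ceil t]
    generalize ⌈t⌉₊ + 1 = B at htB
    have h1 := hG B t ⟨ht0, htB.le⟩
    have hmem : Icc 0 (B : ℝ) ∈ 𝓝[Ici 0] t := by
      filter_upwards [self_mem_nhdsWithin, mem_nhdsWithin_of_mem_nhds (gt_mem_nhds htB)] with s h1 h2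
      exact ⟨h1, h2.le⟩
    have h2 : HasDerivWithinAt (G B) (f (G B t)) (Ici 0) t := h1.mono_of_mem_nhdsWithin hmem
    simp only [hval B t ht0 htB.le]
    refine h2.congr_of_eventuallyEq ?_ (hval B t ht0 htB.le)
    filter_upwards [hmem] with s hs
    exact hval B s hs.1 hs.2
  · exact hG0 _

lemma sol_of {γ : ℝ → Fin n → ℝ} (h : IsSolOn f Set.univ (Set.Ici 0) γ) (T : ℝ) : SolT f T γ :=
  fun t ht => (h.2 t ht.1).mono Icc_subset_Ici_self

lemma strict_unrel (hf : ContDiff ℝ 1 f) (hcoop : coopVF f Set.univ)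
    (hirr : ∀ x, matIrred (jacMat f x)) (hH : ContDiff ℝ 1 H)
    (hfi : ∀ x, fderiv ℝ H x (f x) = 0) (hm : 0 < m) (hmM : m ≤ M)
    (hg : ∀ x, ∀ i, m ≤ fderiv ℝ H x (Pi.single i 1) ∧ fderiv ℝ H x (Pi.single i 1) ≤ M)
    {a b : ℝ → Fin n → ℝ} (ha : SolT f 1 a) (hb : SolT f 1 b)
    (h : DD H (a 0) (b 0) ≤ DD H (a 1) (b 1)) : a 0 ≤ b 0 ∨ b 0 ≤ a 0 := by
  by_contra hcon
  push Not at hcon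
  obtain ⟨u, hu0, hu⟩ := exist_T hf hcoop hH hfi hm hmM hg (a 0 ⊔ b 0) 1 zero_le_one
  obtain ⟨l, hl0, hl⟩ := exist_T hf hcoop hH hfi hm hmM hg (a 0 ⊓ b 0) 1 zero_le_one
  have h1m : (1 : ℝ) ∈ Icc (0:ℝ) 1 := ⟨zero_le_one, le_rfl⟩
  have h1 := strong hf hcoop hirr hH hfi hm hg one_pos ha hu (by rw [hu0]; exact le_sup_left)
    (by rw [hu0]; intro h; exact hcon.2 (h ▸ le_sup_right))
  have h2 := strong hf hcoop hirr hH hfi hm hg one_pos hb hu (by rw [hu0]; exact le_sup_right)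
    (by rw [hu0]; intro h; exact hcon.1 (le_sup_left.trans h.ge))
  have h3 := mono_sol hf hcoop hl ha (by rw [hl0]; exact inf_le_left) 1 h1m
  have h4 := mono_sol hf hcoop hl hb (by rw [hl0]; exact inf_le_right) 1 h1m
  obtain ⟨i, hi⟩ : ∃ i, ¬ a 0 i ≤ b 0 i := by
    by_contra hc
    push Not at hc
    exact hcon.1 hc
  have h5 : H (a 1 ⊔ b 1) < H (u 1) := by
    refine H_strict hH hm hg (sup_le (fun i => (h1 i).le) (fun i => (h2 i).le)) ?_
    intro he
    have := congrFun he i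
    rw [Pi.sup_apply] at this
    have h6 := max_lt (h1 i) (h2 i)
    exact h6.ne this
  have h6 := H_mono hH hm hg (le_inf h3 h4)
  have h7 := H_const hH hfi hu h1m
  have h8 := H_const hH hfi hl h1m
  rw [hu0] at h7
  rw [hl0] at h8
  unfold DD at h
  linarith

lemma omega_zero (hf : ContDiff ℝ 1 f) (hcoop : coopVF f Set.univ)
    (hirr : ∀ x, matIrred (jacMat f x)) (hH : ContDiff ℝ 1 H)
    (hfi : ∀ x, fderiv ℝ H x (f x) = 0) (hm : 0 < m) (hmM : m ≤ M)
    (hg : ∀ x, ∀ i, m ≤ fderiv ℝ H x (Pi.single i 1) ∧ fderiv ℝ H x (Pi.single i 1) ≤ M)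
    {γ : ℝ → Fin n → ℝ} (h : IsSolOn f Set.univ (Set.Ici 0) γ) {q : Fin n → ℝ}
    (hq : q ∈ omegaSet Set.univ γ) : f q = 0 := by
  obtain ⟨-, τ, hτ, hγτ⟩ := hq
  obtain ⟨δ, hδ, hδ0⟩ := exist_global hf hcoop hH hfi hm hmM hg q
  have hlim : ∀ u, 0 ≤ u → Tendsto (fun k => γ (τ k + u)) atTop (𝓝 (δ u)) := by
    intro u hu
    rw [tendsto_iff_norm_sub_tendsto_zero]
    have h1 : Tendsto (fun k => M * n / m * ‖γ (τ k) - q‖) atTop (𝓝 0) := by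
      simpa using (tendsto_iff_norm_sub_tendsto_zero.1 hγτ).const_mul (M * n / m)
    refine squeeze_zero' (Eventually.of_forall fun _ => norm_nonneg _) ?_ h1
    filter_upwards [hτ.eventually_ge_atTop 0] with k hk
    have := contract hf hcoop hH hfi hm hmM hg ((sol_of h (u + τ k)).shift hk)
      (sol_of hδ (u + τ k - τ k)) (t := u) ⟨hu, by linarith⟩
    simpa [hδ0, add_comm] using this
  have hconst : ∀ s, 0 < s → δ s = q := by
    intro s hs
    set d : ℝ → ℝ := fun t => DD H (γ (max t 0)) (γ (max t 0 + s)) with hd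
    have hdanti : Antitone d := by
      intro t t' htt'
      have hmax : max t 0 ≤ max t' 0 := max_le_max htt' le_rfl
      have h0 : 0 ≤ max t 0 := le_max_right _ _
      generalize hx : max t 0 = x at *
      generalize hy : max t' 0 = y at *
      simp only [hd, hx, hy]
      have := DD_anti hf hcoop hH hfi hm hg
        ((sol_of h (y - x + x)).shift h0)
        ((sol_of h (y - x + (x + s))).shift (s := x + s) (by linarith) |>.mono (by linarith))
        (t := y - x) ⟨by linarith, by linarith⟩
      simpa [← add_assoc] using this
    have hbb : BddBelow (range d) := ⟨0, by rintro _ ⟨t, rfl⟩; exact DD_nonneg hH hm hmM hg _ _⟩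
    have hdl := tendsto_atTop_ciInf hdanti hbb
    have hDu : ∀ u, 0 ≤ u → DD H (δ u) (δ (u + s)) = ⨅ t, d t := by
      intro u hu
      have h1 : Tendsto (fun k => d (τ k + u)) atTop (𝓝 (⨅ t, d t)) :=
        hdl.comp (tendsto_atTop_add_const_right _ u hτ)
      have h2 : Tendsto (fun k => DD H (γ (τ k + u)) (γ (τ k + (u + s)))) atTop
          (𝓝 (DD H (δ u) (δ (u + s)))) :=
        ((DD_cont hH).tendsto (δ u, δ (u + s))).comp
          ((hlim u hu).prodMk_nhds (hlim (u + s) (by linarith)))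
      refine tendsto_nhds_unique h2 (h1.congr' ?_)
      filter_upwards [hτ.eventually_ge_atTop 0] with k hk
      simp only [hd]
      rw [max_eq_left (by linarith : 0 ≤ τ k + u), add_assoc]
    have hrel := strict_unrel hf hcoop hirr hH hfi hm hmM hg (sol_of hδ 1)
      ((sol_of hδ (1 + s)).shift hs.le |>.mono (by linarith)) (by
        have h0 := hDu 0 le_rfl
        have h1 := hDu 1 zero_le_one
        rw [h0, h1])
    have hHe : H (δ s) = H (δ 0) := H_const hH hfi (sol_of hδ s) ⟨hs.le, le_rfl⟩
    simp only [zero_add] at hrel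
    rw [← hδ0]
    by_contra hne
    rcases hrel with hr | hr
    · have := H_strict hH hm hg hr (Ne.symm hne); linarith
    · have := H_strict hH hm hg hr hne; linarith
  have h1 : HasDerivWithinAt δ (f q) (Ici 0) 0 := by
    have := hδ.2 0 (self_mem_Ici)
    rwa [hδ0] at this
  have h2 : HasDerivWithinAt δ 0 (Ici 0) 0 := by
    refine (hasDerivWithinAt_const (0:ℝ) (Ici 0) q).congr ?_ hδ0
    intro s hs
    rcases eq_or_lt_of_le (show (0:ℝ) ≤ s from hs) with h | h
    · rw [← h, hδ0]
    · exact hconst s h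
  exact (uniqueDiffOn_Ici (0:ℝ) 0 self_mem_Ici).eq_deriv _ h1 h2

lemma const_sol {p : Fin n → ℝ} (hp : f p = 0) : IsSolOn f Set.univ (Set.Ici 0) (fun _ => p) :=
  ⟨fun _ _ => trivial, fun t _ => by rw [hp]; exact hasDerivWithinAt_const _ _ _⟩

lemma omega_unique (hf : ContDiff ℝ 1 f) (hcoop : coopVF f Set.univ)
    (hH : ContDiff ℝ 1 H)
    (hfi : ∀ x, fderiv ℝ H x (f x) = 0) (hm : 0 < m) (hmM : m ≤ M)
    (hg : ∀ x, ∀ i, m ≤ fderiv ℝ H x (Pi.single i 1) ∧ fderiv ℝ H x (Pi.single i 1) ≤ M)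
    {γ : ℝ → Fin n → ℝ} (h : IsSolOn f Set.univ (Set.Ici 0) γ) {q : Fin n → ℝ}
    (hq : q ∈ omegaSet Set.univ γ) (hfq : f q = 0) : omegaSet Set.univ γ = {q} := by
  obtain ⟨-, τ, hτ, hγτ⟩ := id hq
  have hlim : Tendsto γ atTop (𝓝 q) := by
    have hC : 0 ≤ M * n / m := by have := hm.trans_le hmM; positivity
    rw [Metric.tendsto_atTop]
    intro ε hε
    have h1 : Tendsto (fun k => M * n / m * ‖γ (τ k) - q‖) atTop (𝓝 0) := by
      simpa using (tendsto_iff_norm_sub_tendsto_zero.1 hγτ).const_mul (M * n / m)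
    obtain ⟨k, hk, hk0⟩ := ((h1.eventually (gt_mem_nhds hε)).and (hτ.eventually_ge_atTop 0)).exists
    refine ⟨τ k, fun t ht => ?_⟩
    have := contract hf hcoop hH hfi hm hmM hg ((sol_of h t).shift hk0)
      (sol_of (const_sol hfq) (t - τ k)) (t := t - τ k) ⟨by linarith, le_rfl⟩
    simp only [zero_add, sub_add_cancel] at this
    rw [dist_eq_norm]
    exact this.trans_lt hk
  ext y
  simp only [mem_singleton_iff]
  constructor
  · rintro ⟨-, σ, hσ, hy⟩
    exact tendsto_nhds_unique hy (hlim.comp hσ)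
  · rintro rfl; exact hq

lemma omega_nonempty (hf : ContDiff ℝ 1 f) (hcoop : coopVF f Set.univ)
    (hH : ContDiff ℝ 1 H)
    (hfi : ∀ x, fderiv ℝ H x (f x) = 0) (hm : 0 < m) (hmM : m ≤ M)
    (hg : ∀ x, ∀ i, m ≤ fderiv ℝ H x (Pi.single i 1) ∧ fderiv ℝ H x (Pi.single i 1) ≤ M)
    {γ : ℝ → Fin n → ℝ} (h : IsSolOn f Set.univ (Set.Ici 0) γ) {p : Fin n → ℝ}
    (hp : f p = 0) : ∃ q, q ∈ omegaSet Set.univ γ := by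
  have hb : ∀ k : ℕ, γ k ∈ Metric.closedBall p (M * n / m * ‖γ 0 - p‖) := by
    intro k
    rw [Metric.mem_closedBall, dist_eq_norm]
    exact contract hf hcoop hH hfi hm hmM hg (sol_of h k) (sol_of (const_sol hp) k)
      ⟨k.cast_nonneg, le_rfl⟩
  obtain ⟨q, -, φ, hφ, hq⟩ := (isCompact_closedBall p _).tendsto_subseq hb
  exact ⟨q, trivial, fun k => (φ k : ℝ), tendsto_natCast_atTop_atTop.comp hφ.tendsto_atTop, hq⟩

end Stmt12

open Stmt12

/-- global dichotomy for cooperative irreducible systems on `ℝⁿ`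
with a first integral whose partial derivatives are uniformly bounded between
two positive constants. -/
theorem stmt_12 {n : ℕ} {f : (Fin n → ℝ) → (Fin n → ℝ)} (hf : ContDiff ℝ 1 f)
    (hcoop : coopVF f Set.univ) (hirr : ∀ x, matIrred (jacMat f x))
    {H : (Fin n → ℝ) → ℝ} (hH : ContDiff ℝ 1 H)
    (hfi : ∀ x, fderiv ℝ H x (f x) = 0)
    {m M : ℝ} (hm : 0 < m) (hmM : m ≤ M)
    (hg : ∀ x, ∀ i, m ≤ fderiv ℝ H x (Pi.single i 1) ∧
      fderiv ℝ H x (Pi.single i 1) ≤ M) :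
    (∀ x, ∃ γ : ℝ → Fin n → ℝ, IsSolOn f Set.univ (Set.Ici 0) γ ∧ γ 0 = x) ∧
    Xor'
      ((∀ γ : ℝ → Fin n → ℝ, IsSolOn f Set.univ (Set.Ici 0) γ →
          ∃ p : Fin n → ℝ, omegaSet Set.univ γ = {p}) ∧
        (∀ y z : Fin n → ℝ, f y = 0 → f z = 0 → y ≠ z → strLt y z ∨ strLt z y))
      (∀ γ : ℝ → Fin n → ℝ, IsSolOn f Set.univ (Set.Ici 0) γ →
          omegaSet Set.univ γ = ∅) := by
  refine ⟨fun x => exist_global hf hcoop hH hfi hm hmM hg x, ?_⟩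
  by_cases hp : ∃ p, f p = 0
  · obtain ⟨p, hp⟩ := hp
    refine Or.inl ⟨⟨fun γ hγ => ?_, fun y z hy hz hyz => ?_⟩, fun hb => ?_⟩
    · obtain ⟨q, hq⟩ := omega_nonempty hf hcoop hH hfi hm hmM hg hγ hp
      exact ⟨q, omega_unique hf hcoop hH hfi hm hmM hg hγ hq
        (omega_zero hf hcoop hirr hH hfi hm hmM hg hγ hq)⟩
    · have hys := sol_of (const_sol hy) 1
      have hzs := sol_of (const_sol hz) 1
      rcases strict_unrel hf hcoop hirr hH hfi hm hmM hg hys hzs le_rfl with h | h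
      · exact Or.inl (strong hf hcoop hirr hH hfi hm hg one_pos hys hzs h hyz)
      · exact Or.inr (strong hf hcoop hirr hH hfi hm hg one_pos hzs hys h hyz.symm)
    · obtain ⟨q, hq⟩ := omega_nonempty hf hcoop hH hfi hm hmM hg (const_sol hp) hp
      rw [hb _ (const_sol hp)] at hq
      exact hq
  · have hb : ∀ γ : ℝ → Fin n → ℝ, IsSolOn f Set.univ (Set.Ici 0) γ →
        omegaSet Set.univ γ = ∅ := by
      intro γ hγ
      rw [Set.eq_empty_iff_forall_notMem]
      intro q hq
      exact hp ⟨q, omega_zero hf hcoop hirr hH hfi hm hmM hg hγ hq⟩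
    refine Or.inr ⟨hb, fun ha => ?_⟩
    obtain ⟨γ, hγ, -⟩ := exist_global hf hcoop hH hfi hm hmM hg 0
    obtain ⟨q, hq⟩ := ha.1 γ hγ
    rw [hb γ hγ] at hq
    exact (Set.singleton_nonempty q).ne_empty hq.symm
end
end

section
/- Let f : ℝⁿ → ℝⁿ be a C¹ cooperative irreducible vector field admitting a C¹ first integral H : ℝⁿ → ℝ such that for some constants 0 < m ≤ M one has m ≤ ∂H/∂xᵢ(x) ≤ M for all i and all x ∈ ℝⁿ. If γ : [0,b) → ℝⁿ is a solution of ẋ = f(x) with b < ∞, then the finite limit lim_{t→b⁻} γ(t) exists in ℝⁿ. Consequently, no maximal solution of ẋ = f(x) has finite forward escape time: every maximal solution is defined on all of [0,∞). -/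
open Set Filter Topology

noncomputable section

theorem aux_map_sum {n : ℕ} (l : (Fin n → ℝ) →L[ℝ] ℝ) (v : Fin n → ℝ) :
    l v = ∑ i, v i * l (Pi.single i 1) := by
  conv_lhs => rw [pi_eq_sum_univ' v]
  simp [map_sum]

theorem aux_kamke_s13 {n : ℕ} {f : (Fin n → ℝ) → (Fin n → ℝ)} (hf : ContDiff ℝ 1 f)
    (hcoop : coopVF f Set.univ) {x y : Fin n → ℝ} (hxy : x ≤ y) (i : Fin n) (hi : x i = y i) :
    f x i ≤ f y i := by
  have hd : ∀ z ∈ (univ : Set (Fin n → ℝ)), HasFDerivWithinAt (fun w => f w i)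
      ((ContinuousLinearMap.proj (R := ℝ) (φ := fun _ : Fin n => ℝ) i).comp (fderiv ℝ f z))
      univ z := by
    intro z _
    have h1 : HasFDerivAt f (fderiv ℝ f z) z :=
      ((hf.differentiable (by norm_num)) z).hasFDerivAt
    exact ((ContinuousLinearMap.proj (R := ℝ) (φ := fun _ : Fin n => ℝ)
      i).hasFDerivAt.comp z h1).hasFDerivWithinAt
  obtain ⟨z, -, hz⟩ := domain_mvt hd convex_univ (mem_univ x) (mem_univ y)
  rw [aux_map_sum] at hz
  have : 0 ≤ f y i - f x i := by
    rw [hz]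
    apply Finset.sum_nonneg
    intro j _
    by_cases hj : i = j
    · subst hj; simp [hi]
    · exact mul_nonneg (by simpa using hxy j) (hcoop z (mem_univ z) i j hj)
  linarith

theorem aux_H {n : ℕ} {H : (Fin n → ℝ) → ℝ} (hH : ContDiff ℝ 1 H) {m M : ℝ}
    (hg : ∀ x, ∀ i, m ≤ fderiv ℝ H x (Pi.single i 1) ∧
      fderiv ℝ H x (Pi.single i 1) ≤ M) {x y : Fin n → ℝ} (hxy : x ≤ y) :
    m * ∑ i, (y i - x i) ≤ H y - H x ∧ H y - H x ≤ M * ∑ i, (y i - x i) := by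
  have hd : ∀ z ∈ (univ : Set (Fin n → ℝ)), HasFDerivWithinAt H (fderiv ℝ H z) univ z :=
    fun z _ => ((hH.differentiable (by norm_num)) z).hasFDerivAt.hasFDerivWithinAt
  obtain ⟨z, -, hz⟩ := domain_mvt hd convex_univ (mem_univ x) (mem_univ y)
  rw [aux_map_sum] at hz
  rw [hz, Finset.mul_sum, Finset.mul_sum]
  constructor
  · apply Finset.sum_le_sum
    intro i _
    have := mul_le_mul_of_nonneg_left (hg z i).1 (sub_nonneg.2 (hxy i))
    simp only [Pi.sub_apply]; linarith
  · apply Finset.sum_le_sum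
    intro i _
    have := mul_le_mul_of_nonneg_left (hg z i).2 (sub_nonneg.2 (hxy i))
    simp only [Pi.sub_apply]; linarith

theorem aux_max_deriv_s13 {u v : ℝ → ℝ} {u' v' t : ℝ} (hu : HasDerivWithinAt u u' (Ici t) t)
    (hv : HasDerivWithinAt v v' (Ici t) t) :
    ∃ w, HasDerivWithinAt (fun s => max (u s) (v s)) w (Ici t) t ∧
      ((v t < u t ∧ w = u') ∨ (u t < v t ∧ w = v') ∨ (u t = v t ∧ w = max u' v')) := by
  rcases lt_trichotomy (u t) (v t) with h | h | h
  · refine ⟨v', ?_, Or.inr (Or.inl ⟨h, rfl⟩)⟩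
    refine hv.congr_of_eventuallyEq ?_ (max_eq_right h.le)
    filter_upwards [hu.continuousWithinAt.eventually_lt hv.continuousWithinAt h] with s hs
    exact max_eq_right hs.le
  · refine ⟨max u' v', ?_, Or.inr (Or.inr ⟨h, rfl⟩)⟩
    rw [← hasDerivWithinAt_Ioi_iff_Ici] at *
    rw [hasDerivWithinAt_iff_tendsto_slope' self_notMem_Ioi] at *
    refine (hu.max hv).congr' ?_
    filter_upwards [self_mem_nhdsWithin] with s hs
    have hs' : 0 < s - t := sub_pos.2 hs
    simp only [slope_def_field, h, max_self]
    rw [max_div_div_right hs'.le, max_sub_sub_right]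
  · refine ⟨u', ?_, Or.inl ⟨h, rfl⟩⟩
    refine hu.congr_of_eventuallyEq ?_ (max_eq_left h.le)
    filter_upwards [hv.continuousWithinAt.eventually_lt hu.continuousWithinAt h] with s hs
    exact max_eq_left hs.le

/-- Solution in right-derivative form on `[0,T]`. -/
def RSol {n : ℕ} (f : (Fin n → ℝ) → (Fin n → ℝ)) (T : ℝ) (x : ℝ → Fin n → ℝ) : Prop :=
  ContinuousOn x (Icc 0 T) ∧ ∀ t ∈ Ico 0 T, HasDerivWithinAt x (f (x t)) (Ici t) t

theorem aux_const {n : ℕ} {f : (Fin n → ℝ) → (Fin n → ℝ)}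
    {H : (Fin n → ℝ) → ℝ} (hH : ContDiff ℝ 1 H)
    (hfi : ∀ x, fderiv ℝ H x (f x) = 0) {T : ℝ} {x : ℝ → Fin n → ℝ} (hx : RSol f T x) :
    ∀ t ∈ Icc 0 T, H (x t) = H (x 0) := by
  refine constant_of_has_deriv_right_zero (f := H ∘ x)
    (hH.continuous.comp_continuousOn hx.1) ?_
  intro t ht
  have := (((hH.differentiable (by norm_num)) (x t)).hasFDerivAt).comp_hasDerivWithinAt t
    (hx.2 t ht)
  rwa [hfi] at this

theorem aux_mono {n : ℕ} {f : (Fin n → ℝ) → (Fin n → ℝ)} (hf : ContDiff ℝ 1 f)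
    (hcoop : coopVF f Set.univ)
    {H : (Fin n → ℝ) → ℝ} (hH : ContDiff ℝ 1 H)
    (hfi : ∀ x, fderiv ℝ H x (f x) = 0)
    {m M : ℝ} (hm : 0 < m)
    (hg : ∀ x, ∀ i, m ≤ fderiv ℝ H x (Pi.single i 1) ∧
      fderiv ℝ H x (Pi.single i 1) ≤ M) {T : ℝ} {x y : ℝ → Fin n → ℝ}
    (hx : RSol f T x) (hy : RSol f T y) :
    ∀ t ∈ Icc 0 T, H (x t ⊔ y t) ≤ H (x 0 ⊔ y 0) := by
  have key : ∀ t ∈ Ico 0 T, ∃ w : ℝ, HasDerivWithinAt (fun s => H (x s ⊔ y s)) w (Ici t) t ∧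
      w ≤ 0 := by
    intro t ht
    have h1 := hasDerivWithinAt_pi.1 (hx.2 t ht)
    have h2 := hasDerivWithinAt_pi.1 (hy.2 t ht)
    choose w hw hw' using fun i => aux_max_deriv_s13 (h1 i) (h2 i)
    have h3 : HasDerivWithinAt (fun s => x s ⊔ y s) w (Ici t) t :=
      hasDerivWithinAt_pi.2 hw
    have h4 := HasFDerivAt.comp_hasDerivWithinAt t
      (((hH.differentiable (by norm_num)) (x t ⊔ y t)).hasFDerivAt) h3
    refine ⟨_, h4, ?_⟩
    rw [← hfi (x t ⊔ y t), aux_map_sum, aux_map_sum _ (f _)]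
    apply Finset.sum_le_sum
    intro i _
    refine mul_le_mul_of_nonneg_right ?_ (hm.le.trans (hg _ i).1)
    have kx : y t i ≤ x t i → f (x t) i ≤ f (x t ⊔ y t) i := fun h =>
      aux_kamke_s13 hf hcoop le_sup_left i (by simp [h])
    have ky : x t i ≤ y t i → f (y t) i ≤ f (x t ⊔ y t) i := fun h =>
      aux_kamke_s13 hf hcoop le_sup_right i (by simp [h])
    rcases hw' i with ⟨h, e⟩ | ⟨h, e⟩ | ⟨h, e⟩
    · rw [e]; exact kx h.le
    · rw [e]; exact ky h.le
    · rw [e]; exact max_le (kx h.ge) (ky h.le)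
  choose! w hw hw' using key
  have hc : ContinuousOn (fun s => H (x s ⊔ y s)) (Icc 0 T) :=
    hH.continuous.comp_continuousOn (continuousOn_pi.2 fun i =>
      ContinuousOn.sup (continuousOn_pi.1 hx.1 i) (continuousOn_pi.1 hy.1 i))
  intro t ht
  exact image_le_of_deriv_right_le_deriv_boundary hc hw (B := fun _ => H (x 0 ⊔ y 0))
    (B' := fun _ => 0) le_rfl continuousOn_const
    (fun s _ => hasDerivWithinAt_const _ _ _) hw' ht

theorem aux_contr {n : ℕ} {f : (Fin n → ℝ) → (Fin n → ℝ)} (hf : ContDiff ℝ 1 f)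
    (hcoop : coopVF f Set.univ)
    {H : (Fin n → ℝ) → ℝ} (hH : ContDiff ℝ 1 H)
    (hfi : ∀ x, fderiv ℝ H x (f x) = 0)
    {m M : ℝ} (hm : 0 < m)
    (hg : ∀ x, ∀ i, m ≤ fderiv ℝ H x (Pi.single i 1) ∧
      fderiv ℝ H x (Pi.single i 1) ≤ M) {T : ℝ} {x y : ℝ → Fin n → ℝ}
    (hx : RSol f T x) (hy : RSol f T y) :
    ∀ t ∈ Icc 0 T, ∑ i, |x t i - y t i| ≤ M / m * ∑ i, |x 0 i - y 0 i| := by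
  intro t ht
  have e : ∀ s, ∑ i, |x s i - y s i| =
      ∑ i, ((x s ⊔ y s) i - x s i) + ∑ i, ((x s ⊔ y s) i - y s i) := by
    intro s
    rw [← Finset.sum_add_distrib]
    refine Finset.sum_congr rfl fun i _ => ?_
    simp only [Pi.sup_apply]
    rcases le_total (x s i) (y s i) with h | h
    · rw [sup_eq_right.2 h, abs_of_nonpos (by linarith)]; ring
    · rw [sup_eq_left.2 h, abs_of_nonneg (by linarith)]; ring
  have h1 := aux_mono hf hcoop hH hfi hm hg hx hy t ht
  have cx := aux_const hH hfi hx t ht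
  have cy := aux_const hH hfi hy t ht
  have a1 := (aux_H hH hg (le_sup_left : x t ≤ x t ⊔ y t)).1
  have a2 := (aux_H hH hg (le_sup_right : y t ≤ x t ⊔ y t)).1
  have a3 := (aux_H hH hg (le_sup_left : x 0 ≤ x 0 ⊔ y 0)).2
  have a4 := (aux_H hH hg (le_sup_right : y 0 ≤ x 0 ⊔ y 0)).2
  rw [div_mul_eq_mul_div, le_div_iff₀ hm, e, e]
  linarith

theorem aux_vel {n : ℕ} {f : (Fin n → ℝ) → (Fin n → ℝ)} (hf : ContDiff ℝ 1 f)
    (hcoop : coopVF f Set.univ)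
    {H : (Fin n → ℝ) → ℝ} (hH : ContDiff ℝ 1 H)
    (hfi : ∀ x, fderiv ℝ H x (f x) = 0)
    {m M : ℝ} (hm : 0 < m)
    (hg : ∀ x, ∀ i, m ≤ fderiv ℝ H x (Pi.single i 1) ∧
      fderiv ℝ H x (Pi.single i 1) ≤ M) {T : ℝ} {x : ℝ → Fin n → ℝ}
    (hx : RSol f T x) :
    ∀ t ∈ Ico 0 T, ‖f (x t)‖ ≤ M / m * ∑ i, |f (x 0) i| := by
  intro t ht
  have hT : 0 < T := ht.1.trans_lt ht.2
  -- the inequality for finite differences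
  have h1 : ∀ h, 0 < h → t + h ≤ T →
      ∑ i, |x (t + h) i - x t i| ≤ M / m * ∑ i, |x (0 + h) i - x 0 i| := by
    intro h hh hth
    have s1 : RSol f t x := ⟨hx.1.mono (Icc_subset_Icc_right ht.2.le),
      fun s hs => hx.2 s ⟨hs.1, hs.2.trans ht.2⟩⟩
    have s2 : RSol f t (fun s => x (s + h)) := by
      constructor
      · refine hx.1.comp (by fun_prop) ?_
        intro s hs
        exact ⟨by linarith [hs.1], by linarith [hs.2]⟩
      · intro s hs
        have := hx.2 (s + h) ⟨by linarith [hs.1], by linarith [hs.2]⟩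
        have e : HasDerivWithinAt (fun s : ℝ => s + h) 1 (Ici s) s :=
          (hasDerivWithinAt_id s _).add_const h
        have := this.scomp s e (fun r hr => by simpa using hr)
        rw [one_smul] at this
        exact this
    exact aux_contr hf hcoop hH hfi hm hg s2 s1 t ⟨ht.1, le_rfl⟩
  have lim : ∀ s ∈ Ico 0 T, Tendsto (fun h : ℝ => ∑ i, |x (s + h) i - x s i| / h) (𝓝[>] 0)
      (𝓝 (∑ i, |f (x s) i|)) := by
    intro s hs
    refine tendsto_finsetSum _ fun i _ => ?_
    have d := hasDerivWithinAt_pi.1 (hx.2 s hs) i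
    rw [← hasDerivWithinAt_Ioi_iff_Ici,
      hasDerivWithinAt_iff_tendsto_slope' self_notMem_Ioi] at d
    have tr : Tendsto (fun h : ℝ => s + h) (𝓝[>] 0) (𝓝[>] s) := by
      refine tendsto_nhdsWithin_iff.2 ⟨?_, ?_⟩
      · have : Tendsto (fun h : ℝ => s + h) (𝓝 0) (𝓝 (s + 0)) :=
          (continuous_const.add continuous_id).tendsto 0
        rw [add_zero] at this
        exact this.mono_left nhdsWithin_le_nhds
      · filter_upwards [self_mem_nhdsWithin] with h hh
        simpa using hh
    refine ((d.comp tr).abs).congr' ?_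
    filter_upwards [self_mem_nhdsWithin] with h hh
    have hh' : (0 : ℝ) < h := hh
    simp [slope_def_field, abs_div, abs_of_pos hh']
  have h2 : ∑ i, |f (x t) i| ≤ M / m * ∑ i, |f (x 0) i| := by
    refine le_of_tendsto_of_tendsto (lim t ht) ((lim 0 ⟨le_rfl, hT⟩).const_mul (M / m)) ?_
    have : ∀ᶠ h in 𝓝[>] (0 : ℝ), h ∈ Ioc 0 (T - t) := Ioc_mem_nhdsGT (sub_pos.2 ht.2)
    filter_upwards [this] with h hh
    rw [← Finset.sum_div, ← Finset.sum_div, ← mul_div_assoc]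
    exact div_le_div_of_nonneg_right (h1 h hh.1 (by linarith [hh.2])) hh.1.le
  refine le_trans ?_ h2
  refine (pi_norm_le_iff_of_nonneg (Finset.sum_nonneg fun i _ => abs_nonneg _)).2 fun i => ?_
  exact Finset.single_le_sum (f := fun i => |f (x t) i|) (fun i _ => abs_nonneg _)
    (Finset.mem_univ i)

theorem aux_right {n : ℕ} {z : ℝ → Fin n → ℝ} {v : Fin n → ℝ} {T t : ℝ} {s : Set ℝ}
    (hs : Ico 0 T ⊆ s) (ht : t ∈ Ico 0 T) (h : HasDerivWithinAt z v s t) :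
    HasDerivWithinAt z v (Ici t) t := by
  refine h.mono_of_mem_nhdsWithin (mem_of_superset (Ico_mem_nhdsGE ht.2) ?_)
  exact (Ico_subset_Ico_left ht.1).trans hs

/-- Coordinatewise truncation to the box `[-R,R]^n`. -/
def clampR {n : ℕ} (R : ℝ) (x : Fin n → ℝ) : Fin n → ℝ := fun i => max (-R) (min R (x i))

theorem clampR_mem {n : ℕ} {R : ℝ} (hR : 0 ≤ R) (x : Fin n → ℝ) :
    clampR R x ∈ Metric.closedBall (0 : Fin n → ℝ) R := by
  rw [mem_closedBall_zero_iff, pi_norm_le_iff_of_nonneg hR]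
  intro i
  rw [Real.norm_eq_abs, abs_le]
  exact ⟨le_max_left _ _, max_le (by linarith) (min_le_left _ _)⟩

theorem clampR_eq {n : ℕ} {R : ℝ} {x : Fin n → ℝ} (hx : ‖x‖ ≤ R) : clampR R x = x := by
  funext i
  have h := (norm_le_pi_norm x i).trans hx
  rw [Real.norm_eq_abs, abs_le] at h
  simp [clampR, h.1, h.2]

theorem clampR_lip {n : ℕ} (R : ℝ) : LipschitzWith 1 (clampR (n := n) R) := by
  refine LipschitzWith.of_dist_le_mul fun x y => ?_
  rw [NNReal.coe_one, one_mul, dist_pi_le_iff dist_nonneg]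
  intro i
  have h1 : LipschitzWith 1 (fun a : ℝ => max (-R) (min R a)) :=
    (LipschitzWith.id.const_min R).const_max (-R)
  have := h1.dist_le_mul (x i) (y i)
  rw [NNReal.coe_one, one_mul] at this
  exact this.trans (dist_le_pi_dist x y i)

theorem aux_exist {n : ℕ} {f : (Fin n → ℝ) → (Fin n → ℝ)} (hf : ContDiff ℝ 1 f)
    (hcoop : coopVF f Set.univ)
    {H : (Fin n → ℝ) → ℝ} (hH : ContDiff ℝ 1 H)
    (hfi : ∀ x, fderiv ℝ H x (f x) = 0)
    {m M : ℝ} (hm : 0 < m) (hmM : m ≤ M)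
    (hg : ∀ x, ∀ i, m ≤ fderiv ℝ H x (Pi.single i 1) ∧
      fderiv ℝ H x (Pi.single i 1) ≤ M) (x : Fin n → ℝ) {T : ℝ} (hT : 0 < T) :
    ∃ z : ℝ → Fin n → ℝ, z 0 = x ∧
      ∀ t ∈ Icc 0 T, HasDerivWithinAt z (f (z t)) (Icc 0 T) t := by
  set B : ℝ := M / m * ∑ i, |f x i| with hB
  have hB0 : 0 ≤ B := mul_nonneg (div_nonneg (hm.le.trans hmM) hm.le)
    (Finset.sum_nonneg fun i _ => abs_nonneg _)
  set R : ℝ := ‖x‖ + B * T + 1 with hR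
  have hR0 : 0 ≤ R := by positivity
  have hBall : IsCompact (Metric.closedBall (0 : Fin n → ℝ) R) := isCompact_closedBall _ _
  obtain ⟨K, hK⟩ := hf.contDiffOn.exists_lipschitzOnWith (by norm_num)
    (convex_closedBall (0 : Fin n → ℝ) R) hBall
  obtain ⟨L, hL⟩ := hBall.exists_bound_of_continuousOn hf.continuous.continuousOn
  have hL0 : 0 ≤ L := (norm_nonneg _).trans (hL 0 (by simpa using hR0))
  have hlip : LipschitzWith (K * 1) (fun y => f (clampR R y)) := by
    rw [← lipschitzOnWith_univ]
    exact hK.comp (clampR_lip R).lipschitzOnWith (fun y _ => clampR_mem hR0 y)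
  have pl : IsPicardLindelof (fun _ y => f (clampR R y)) (tmin := 0) (tmax := T)
      ⟨0, le_rfl, hT.le⟩ x ⟨L * T, by positivity⟩ 0 ⟨L, hL0⟩ (K * 1) :=
    IsPicardLindelof.of_time_independent (fun y _ => hL _ (clampR_mem hR0 y))
      hlip.lipschitzOnWith (by simp [hT.le]; exact le_rfl)
  obtain ⟨z, hz0, hz⟩ := pl.exists_eq_forall_mem_Icc_hasDerivWithinAt₀
  replace hz0 : z 0 = x := hz0
  have hzc : ContinuousOn z (Icc 0 T) := fun t ht => (hz t ht).continuousWithinAt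
  have stay : ∀ t ∈ Icc 0 T, ‖z t‖ < R := by
    by_contra! hcon
    set E : Set ℝ := Icc 0 T ∩ (fun t => ‖z t‖) ⁻¹' (Ici R) with hE
    have hEc : IsCompact E :=
      isCompact_Icc.of_isClosed_subset
        (hzc.norm.preimage_isClosed_of_isClosed isClosed_Icc isClosed_Ici) inter_subset_left
    obtain ⟨t, ht, htR⟩ := hcon
    obtain ⟨τ, hτ, hmin⟩ := hEc.exists_isLeast ⟨t, ht, htR⟩
    have hin : ∀ s ∈ Ico 0 τ, ‖z s‖ ≤ R := by
      intro s hs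
      by_contra! h
      exact absurd (hmin ⟨⟨hs.1, hs.2.le.trans hτ.1.2⟩, h.le⟩) (not_le.2 hs.2)
    have hsol : RSol f τ z := by
      refine ⟨hzc.mono (Icc_subset_Icc_right hτ.1.2), fun s hs => ?_⟩
      have h1 := hz s ⟨hs.1, hs.2.le.trans hτ.1.2⟩
      rw [clampR_eq (hin s hs)] at h1
      exact aux_right (T := τ) (s := Icc 0 T) (fun r hr => ⟨hr.1, hr.2.le.trans hτ.1.2⟩) hs h1
    have hv := aux_vel hf hcoop hH hfi hm hg hsol
    rw [hz0] at hv
    have hd := norm_image_sub_le_of_norm_deriv_right_le_segment hsol.1 hsol.2 hv τ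
      ⟨hτ.1.1, le_rfl⟩
    rw [hz0, sub_zero] at hd
    have h1 : ‖z τ‖ ≤ ‖x‖ + ‖z τ - x‖ := by
      simpa using norm_add_le x (z τ - x)
    have h2 : B * τ ≤ B * T := mul_le_mul_of_nonneg_left hτ.1.2 hB0
    have h3 : R ≤ ‖z τ‖ := hτ.2
    linarith
  refine ⟨z, hz0, fun t ht => ?_⟩
  have h1 := hz t ht
  rwa [clampR_eq (stay t ht).le] at h1

/-- no finite forward escape time: any solution on `[0,b)`, `b < ∞`,
has a finite limit as `t → b⁻`, and every initial value problem has a global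
forward solution. -/
theorem stmt_13 {n : ℕ} {f : (Fin n → ℝ) → (Fin n → ℝ)} (hf : ContDiff ℝ 1 f)
    (hcoop : coopVF f Set.univ) (hirr : ∀ x, matIrred (jacMat f x))
    {H : (Fin n → ℝ) → ℝ} (hH : ContDiff ℝ 1 H)
    (hfi : ∀ x, fderiv ℝ H x (f x) = 0)
    {m M : ℝ} (hm : 0 < m) (hmM : m ≤ M)
    (hg : ∀ x, ∀ i, m ≤ fderiv ℝ H x (Pi.single i 1) ∧
      fderiv ℝ H x (Pi.single i 1) ≤ M) :
    (∀ b : ℝ, 0 < b → ∀ γ : ℝ → Fin n → ℝ,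
      IsSolOn f Set.univ (Set.Ico 0 b) γ →
        ∃ L : Fin n → ℝ, Tendsto γ (𝓝[<] b) (𝓝 L)) ∧
    (∀ x, ∃ γ : ℝ → Fin n → ℝ, IsSolOn f Set.univ (Set.Ici 0) γ ∧ γ 0 = x) := by
  constructor
  · intro b hb γ hγ
    set B : ℝ := M / m * ∑ i, |f (γ 0) i| with hB
    have hB0 : 0 ≤ B := mul_nonneg (div_nonneg (hm.le.trans hmM) hm.le)
      (Finset.sum_nonneg fun i _ => abs_nonneg _)
    have hbound : ∀ t ∈ Ico 0 b, ‖f (γ t)‖₊ ≤ ⟨B, hB0⟩ := by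
      intro t ht
      obtain ⟨T, hT1, hT2⟩ := exists_between ht.2
      have hsol : RSol f T γ := by
        refine ⟨fun s hs => ?_, fun s hs => ?_⟩
        · exact (hγ.2 s ⟨hs.1, hs.2.trans_lt hT2⟩).continuousWithinAt.mono
            fun r hr => ⟨hr.1, hr.2.trans_lt hT2⟩
        · exact aux_right (T := T) (s := Ico 0 b) (fun r hr => ⟨hr.1, hr.2.trans hT2⟩) hs
            (hγ.2 s ⟨hs.1, hs.2.trans hT2⟩)
      exact aux_vel hf hcoop hH hfi hm hg hsol t ⟨ht.1, hT1⟩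
    have hlip := (convex_Ico (0 : ℝ) b).lipschitzOnWith_of_nnnorm_hasDerivWithin_le hγ.2 hbound
    obtain ⟨g, hgl, hge⟩ := hlip.extend_pi
    refine ⟨g b, ?_⟩
    have h1 : Tendsto g (𝓝[<] b) (𝓝 (g b)) := (hgl.continuous.tendsto b).mono_left
      nhdsWithin_le_nhds
    refine h1.congr' ?_
    filter_upwards [Ico_mem_nhdsLT hb] with t ht
    exact (hge ht).symm
  · intro x
    choose z hz0 hz using fun N : ℕ =>
      aux_exist hf hcoop hH hfi hm hmM hg x (T := (N : ℝ) + 1) (by positivity)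
    have hsol : ∀ N : ℕ, ∀ T : ℝ, T ≤ N + 1 → RSol f T (z N) := by
      intro N T hT
      refine ⟨fun s hs => ?_, fun s hs => ?_⟩
      · exact (hz N s ⟨hs.1, hs.2.trans hT⟩).continuousWithinAt.mono (Icc_subset_Icc_right hT)
      · exact aux_right (T := T) (s := Icc 0 ((N : ℝ) + 1)) (fun r hr => ⟨hr.1, hr.2.le.trans hT⟩) hs
          (hz N s ⟨hs.1, hs.2.le.trans hT⟩)
    have hag : ∀ N N' : ℕ, ∀ t : ℝ, 0 ≤ t → t ≤ N + 1 → t ≤ N' + 1 → z N t = z N' t := by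
      intro N N' t h0 h1 h2
      have h := aux_contr hf hcoop hH hfi hm hg (hsol N t h1) (hsol N' t h2) t ⟨h0, le_rfl⟩
      rw [hz0, hz0] at h
      simp only [sub_self, abs_zero, Finset.sum_const_zero, mul_zero] at h
      funext i
      have := (Finset.single_le_sum (f := fun i => |z N t i - z N' t i|)
        (fun i _ => abs_nonneg _) (Finset.mem_univ i)).trans h
      exact sub_eq_zero.1 (abs_nonpos_iff.1 this)
    have hfl : ∀ N : ℕ, ∀ t ∈ Ico (0 : ℝ) (N + 1), z ⌊t⌋₊ t = z N t := fun N t ht =>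
      hag _ _ t ht.1 (Nat.lt_floor_add_one t).le ht.2.le
    refine ⟨fun t => z ⌊t⌋₊ t, ⟨fun _ _ => mem_univ _, fun t ht => ?_⟩, by simp [hz0]⟩
    have ht0 : (0 : ℝ) ≤ t := ht
    have hlt := Nat.lt_floor_add_one t
    have hnh : Ico (0 : ℝ) (⌊t⌋₊ + 1) ∈ 𝓝[Ici 0] t :=
      inter_mem_nhdsWithin (Ici 0) (Iio_mem_nhds hlt)
    have h1 := (hz ⌊t⌋₊ t ⟨ht0, hlt.le⟩).mono_of_mem_nhdsWithin
      (mem_of_superset hnh Ico_subset_Icc_self)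
    refine h1.congr_of_eventuallyEq ?_ rfl
    filter_upwards [hnh] with s hs
    exact hfl _ s hs
end
end

section
/- Let X ⊆ ℝⁿ be an open, order-convex set such that x ∨ y ∈ X for all x, y ∈ X (componentwise maximum), let f : X → ℝⁿ be a C¹ cooperative irreducible vector field, and let H : X → ℝ be a C¹ first integral for ẋ = f(x) with positive gradient. Then f has at most one zero in each level set of H: if y, y₁ ∈ X with f(y) = 0, f(y₁) = 0 and H(y) = H(y₁), then y = y₁. -/
open Set Filter Topology

noncomputable section

/-- Monotonicity along a segment, with a rigidity statement at the midpoint. -/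
theorem seg_aux {n : ℕ} {X : Set (Fin n → ℝ)} (hX : IsOpen X) {g : (Fin n → ℝ) → ℝ}
    (hg : DifferentiableOn ℝ g X) {x y : Fin n → ℝ} (hxy : x ≤ y) (hI : Set.Icc x y ⊆ X)
    (hd : ∀ p ∈ Set.Icc x y, 0 ≤ fderiv ℝ g p (y - x)) :
    g x ≤ g y ∧ x + (1 / 2 : ℝ) • (y - x) ∈ Set.Icc x y ∧
      (g x = g y → fderiv ℝ g (x + (1 / 2 : ℝ) • (y - x)) (y - x) = 0) := by
  have hmem : ∀ t ∈ Set.Icc (0 : ℝ) 1, x + t • (y - x) ∈ Set.Icc x y := by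
    intro t ht
    constructor
    · intro i
      have := hxy i
      simp only [Pi.add_apply, Pi.smul_apply, Pi.sub_apply, smul_eq_mul]
      nlinarith [ht.1, ht.2]
    · intro i
      have := hxy i
      simp only [Pi.add_apply, Pi.smul_apply, Pi.sub_apply, smul_eq_mul]
      nlinarith [ht.1, ht.2]
  have hder : ∀ t ∈ Set.Icc (0 : ℝ) 1, HasDerivAt (fun t : ℝ => g (x + t • (y - x)))
      (fderiv ℝ g (x + t • (y - x)) (y - x)) t := by
    intro t ht
    have h1 : HasFDerivAt g (fderiv ℝ g (x + t • (y - x))) (x + t • (y - x)) :=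
      (hg.differentiableAt (hX.mem_nhds (hI (hmem t ht)))).hasFDerivAt
    have h2 : HasDerivAt (fun t : ℝ => x + t • (y - x)) (y - x) t := by
      simpa using ((hasDerivAt_id t).smul_const (y - x)).const_add x
    exact h1.comp_hasDerivAt t h2
  have hmono : MonotoneOn (fun t : ℝ => g (x + t • (y - x))) (Set.Icc 0 1) := by
    apply monotoneOn_of_deriv_nonneg (convex_Icc 0 1)
    · exact fun t ht => (hder t ht).continuousAt.continuousWithinAt
    · intro t ht
      exact (hder t (interior_subset ht)).differentiableAt.differentiableWithinAt
    · intro t ht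
      rw [(hder t (interior_subset ht)).deriv]
      exact hd _ (hmem t (interior_subset ht))
  have h0 : (0 : ℝ) ∈ Set.Icc (0 : ℝ) 1 := by simp
  have h1 : (1 : ℝ) ∈ Set.Icc (0 : ℝ) 1 := by simp
  have hh : (1 / 2 : ℝ) ∈ Set.Icc (0 : ℝ) 1 := by constructor <;> norm_num
  refine ⟨by simpa using hmono h0 h1 zero_le_one, hmem _ hh, fun heq => ?_⟩
  have hev : (fun t : ℝ => g (x + t • (y - x))) =ᶠ[𝓝 (1 / 2 : ℝ)] fun _ => g x := by
    filter_upwards [Icc_mem_nhds (show (0 : ℝ) < 1 / 2 by norm_num)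
      (show (1 / 2 : ℝ) < 1 by norm_num)] with t ht
    have a := hmono h0 ht ht.1
    have b := hmono ht h1 ht.2
    simp at a b
    linarith
  have := hev.deriv_eq
  rw [(hder _ hh).deriv] at this
  simpa using this

/-- Expansion of a linear functional in coordinates. -/
theorem lin_aux {n : ℕ} (L : (Fin n → ℝ) →L[ℝ] ℝ) (v : Fin n → ℝ) :
    L v = ∑ j, v j * L (Pi.single j 1) := by
  conv_lhs => rw [pi_eq_sum_univ' v]
  simp [map_sum, Pi.single]

/-- at most one equilibrium in each level set of the first integral. -/
theorem stmt_16 {n : ℕ} {X : Set (Fin n → ℝ)} (hX : IsOpen X) (hoc : orderConvex X)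
    (hsup : ∀ x ∈ X, ∀ y ∈ X, x ⊔ y ∈ X)
    {f : (Fin n → ℝ) → (Fin n → ℝ)} (hf : ContDiffOn ℝ 1 f X) (hcoop : coopVF f X)
    (hirr : ∀ x ∈ X, matIrred (jacMat f x))
    {H : (Fin n → ℝ) → ℝ} (hH : ContDiffOn ℝ 1 H X)
    (hfi : ∀ x ∈ X, fderiv ℝ H x (f x) = 0)
    (hgrad : ∀ x ∈ X, ∀ i, 0 < fderiv ℝ H x (Pi.single i 1))
    {y y₁ : Fin n → ℝ} (hy : y ∈ X) (hy₁ : y₁ ∈ X)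
    (hfy : f y = 0) (hfy₁ : f y₁ = 0) (hHeq : H y = H y₁) :
    y = y₁ := by
  have hHd : DifferentiableOn ℝ H X := hH.differentiableOn one_ne_zero
  have hfd : DifferentiableOn ℝ f X := hf.differentiableOn one_ne_zero
  have hfc : ∀ i, DifferentiableOn ℝ (fun x => f x i) X := fun i =>
    (differentiableOn_pi.1 hfd) i
  have hfder : ∀ i, ∀ p ∈ X, ∀ v, fderiv ℝ (fun x => f x i) p v = fderiv ℝ f p v i := by
    intro i p hp v
    have h1 := (hfd.differentiableAt (hX.mem_nhds hp)).hasFDerivAt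
    rw [((hasFDerivAt_pi'.1 h1) i).fderiv]
    rfl
  -- comparable points on the same level are equal
  have hcomp : ∀ a ∈ X, ∀ b ∈ X, a ≤ b → H a = H b → a = b := by
    intro a ha b hb hab hE
    have hI := hoc a ha b hb hab
    have hterm : ∀ p ∈ Set.Icc a b, ∀ j ∈ Finset.univ,
        0 ≤ (b - a) j * fderiv ℝ H p (Pi.single j 1) := fun p hp j _ =>
      mul_nonneg (sub_nonneg.2 (hab j)) (hgrad p (hI hp) j).le
    obtain ⟨-, hp, hp0⟩ := (seg_aux hX hHd hab hI (fun p hp => by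
      rw [lin_aux]; exact Finset.sum_nonneg (hterm p hp)))
    replace hp0 := hp0 hE
    rw [lin_aux, Finset.sum_eq_zero_iff_of_nonneg (hterm _ hp)] at hp0
    funext j
    have := hp0 j (Finset.mem_univ j)
    rcases mul_eq_zero.1 this with h | h
    · exact (sub_eq_zero.1 h).symm
    · exact absurd h (hgrad _ (hI hp) j).ne'
  have hterm : ∀ a ∈ X, ∀ b ∈ X, a ≤ b → ∀ i, a i = b i → ∀ p ∈ Set.Icc a b,
      ∀ j ∈ Finset.univ, 0 ≤ (b - a) j * fderiv ℝ (fun x => f x i) p (Pi.single j 1) := by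
    intro a ha b hb hab i hi p hp j _
    have hpX := hoc a ha b hb hab hp
    by_cases hij : i = j
    · subst hij
      simp [hi]
    · rw [hfder i p hpX]
      exact mul_nonneg (sub_nonneg.2 (hab j)) (hcoop p hpX i j hij)
  have hk := fun a ha b hb hab i hi => seg_aux hX (hfc i) hab (hoc a ha b hb hab)
    (fun p hp => by
      rw [lin_aux]; exact Finset.sum_nonneg (hterm a ha b hb hab i hi p hp))
  have hz := hsup y hy y₁ hy₁
  have hle : y ≤ y ⊔ y₁ := le_sup_left
  have hle₁ : y₁ ≤ y ⊔ y₁ := le_sup_right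
  have hnn : ∀ i, 0 ≤ f (y ⊔ y₁) i := by
    intro i
    rcases le_total (y₁ i) (y i) with h | h
    · have := (hk y hy _ hz hle i (by simp [h])).1
      simpa [hfy] using this
    · have := (hk y₁ hy₁ _ hz hle₁ i (by simp [h])).1
      simpa [hfy₁] using this
  have hz0 : ∀ i, f (y ⊔ y₁) i = 0 := by
    intro i
    have h := hfi _ hz
    rw [lin_aux, Finset.sum_eq_zero_iff_of_nonneg
      (fun j _ => mul_nonneg (hnn j) (hgrad _ hz j).le)] at h
    exact (mul_eq_zero.1 (h i (Finset.mem_univ i))).resolve_right (hgrad _ hz i).ne'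
  by_cases hS1 : ∃ i, y i = (y ⊔ y₁) i
  swap
  · push Not at hS1
    apply hcomp y hy y₁ hy₁ _ hHeq
    intro i
    by_contra h
    exact hS1 i (by simp [(not_le.1 h).le])
  by_cases hS2 : {i | y i = (y ⊔ y₁) i} = Set.univ
  · refine (hcomp y₁ hy₁ y hy (fun i => ?_) hHeq.symm).symm
    have : y i = (y ⊔ y₁) i := by
      have : i ∈ {i | y i = (y ⊔ y₁) i} := hS2 ▸ Set.mem_univ i
      exact this
    rw [this]
    exact hle₁ i
  -- contradiction with irreducibility at the midpoint
  exfalso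
  obtain ⟨i₀, hi₀⟩ := hS1
  have hm := (hk y hy _ hz hle i₀ hi₀).2.1
  have hmX := hoc y hy _ hz hle hm
  obtain ⟨i, hi, j, hj, hne⟩ := hirr _ hmX {i | y i = (y ⊔ y₁) i} ⟨i₀, hi₀⟩ hS2
  have h0 := (hk y hy _ hz hle i hi).2.2 (by rw [hz0 i, hfy]; rfl)
  rw [lin_aux, Finset.sum_eq_zero_iff_of_nonneg (hterm y hy _ hz hle i hi _ hm)] at h0
  rcases mul_eq_zero.1 (h0 j (Finset.mem_univ j)) with h | h
  · exact hj (sub_eq_zero.1 h).symm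
  · rw [hfder i _ hmX] at h
    exact hne h
end
end
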